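/- arXiv:1610.04206 — 2 statements merged into one kernel-verified Lean document; each statement's English description precedes it below -/
import Mathlib

section
/- Let λ = (λ₁, λ₂, 2^{h₂−2}, 1^{h₁−h₂}) be a partition of size n with λ₁ ≥ λ₂ ≥ 2 and h₁ ≥ h₂ ≥ 2, of Durfee size two. For h₁ ≤ m ≤ n−(λ₁−1), the number of quasi-Yamanouchi tableaux of shape λ with maximum entry exactly m equals ((λ₁−λ₂+1)/(m−h₂+1))·C(λ₁+h₁−2, m−h₂)·C(λ₂+h₁−3, m−h₂)·C(m−h₂, m−h₁)·C(λ₂+h₂−4, h₂−2)·C(λ₁+h₂−3, h₂−2)/C(h₁−1, h₂−2). -/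
open YoungDiagram

/-- Entries of `T` are all `< m`.  Entries are 0-based: the value `v` represents the
positive integer `v + 1`, so this says all (1-based) entries are at most `m`. -/
def EntryLE (μ : YoungDiagram) (T : SemistandardYoungTableau μ) (m : ℕ) : Prop :=
  ∀ i j : ℕ, (i, j) ∈ μ → T i j < m

/-- `T` is quasi-Yamanouchi: whenever a value `v > 0` appears, the leftmost
occurrence of `v` is weakly left of some occurrence of `v - 1`; equivalently some
occurrence of `v` is weakly left of some occurrence of `v - 1`. -/
def IsQY (μ : YoungDiagram) (T : SemistandardYoungTableau μ) : Prop :=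
  ∀ v : ℕ, 0 < v → (∃ i j : ℕ, (i, j) ∈ μ ∧ T i j = v) →
    ∃ i j i' j' : ℕ, (i, j) ∈ μ ∧ (i', j') ∈ μ ∧ T i j = v ∧ T i' j' = v - 1 ∧ j ≤ j'

/-- The maximum (1-based) entry of `T` is exactly `m`: all entries are `< m`
(0-based) and the value `m - 1` appears. -/
def MaxEq (μ : YoungDiagram) (T : SemistandardYoungTableau μ) (m : ℕ) : Prop :=
  EntryLE μ T m ∧ ∃ i j : ℕ, (i, j) ∈ μ ∧ T i j = m - 1

/-- The number of quasi-Yamanouchi tableaux of shape `μ` with maximum entry exactly `m`. -/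
noncomputable def QYTeq (μ : YoungDiagram) (m : ℕ) : ℕ :=
  Nat.card {T : SemistandardYoungTableau μ // IsQY μ T ∧ MaxEq μ T m}

/-- The number of semistandard Young tableaux of shape `μ` with entries at most `m`. -/
noncomputable def SSYTle (μ : YoungDiagram) (m : ℕ) : ℕ :=
  Nat.card {T : SemistandardYoungTableau μ // EntryLE μ T m}

/-- `T` is a standard Young tableau: each of the values `0, …, μ.card - 1`
(representing `1, …, n`) appears exactly once. -/
def IsSYT (μ : YoungDiagram) (T : SemistandardYoungTableau μ) : Prop :=
  ∀ v : ℕ, v < μ.card → ∃! p : ℕ × ℕ, p ∈ μ ∧ T p.1 p.2 = v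

/-- The number of standard Young tableaux of shape `μ`. -/
noncomputable def SYTcount (μ : YoungDiagram) : ℕ :=
  Nat.card {T : SemistandardYoungTableau μ // IsSYT μ T}

/-- The descent set of a standard tableau, in the paper's 1-based labelling:
`d ∈ Des T` iff `1 ≤ d ≤ n - 1` and the (1-based) entry `d + 1` (0-based value `d`)
appears weakly left of the (1-based) entry `d` (0-based value `d - 1`). -/
def Des (μ : YoungDiagram) (T : SemistandardYoungTableau μ) : Set ℕ :=
  {d | 1 ≤ d ∧ d ≤ μ.card - 1 ∧
    ∃ i j i' j' : ℕ, (i, j) ∈ μ ∧ (i', j') ∈ μ ∧ T i j = d ∧ T i' j' = d - 1 ∧ j ≤ j'}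

/-- One destandardization step at value `v`: every occurrence of `v` lies strictly
right of every occurrence of `v - 1` (in particular vacuously if no `v - 1` appears),
and `T'` is obtained from `T` by decrementing every entry equal to `v` to `v - 1`. -/
def StepAt (μ : YoungDiagram) (T T' : SemistandardYoungTableau μ) (v : ℕ) : Prop :=
  0 < v ∧ (∃ i j : ℕ, (i, j) ∈ μ ∧ T i j = v) ∧
    (∀ i j i' j' : ℕ, (i, j) ∈ μ → (i', j') ∈ μ → T i j = v → T i' j' = v - 1 → j' < j) ∧
    (∀ i j : ℕ, (i, j) ∈ μ → T' i j = if T i j = v then v - 1 else T i j)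

/-- One destandardization step (at some value). -/
def Step (μ : YoungDiagram) (T T' : SemistandardYoungTableau μ) : Prop :=
  ∃ v : ℕ, StepAt μ T T' v

/-- `Q` is the destandardization of `T`: it is reachable from `T` by destandardization
steps and no further step applies to it. -/
def IsDst (μ : YoungDiagram) (T Q : SemistandardYoungTableau μ) : Prop :=
  Relation.ReflTransGen (Step μ) T Q ∧ ∀ Q' : SemistandardYoungTableau μ, ¬ Step μ Q Q'

/-- The hook length of the box in row `i`, column `j` of `μ`. -/
def hookLength (μ : YoungDiagram) (i j : ℕ) : ℕ :=
  (μ.rowLen i - j) + (μ.colLen j - i) - 1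

/-- The hook-content product `∏_{u ∈ μ} (k + c(u)) / h(u)` where `c(u)` is the
content (column minus row) and `h(u)` the hook length. -/
noncomputable def hookContent (μ : YoungDiagram) (k : ℕ) : ℚ :=
  ∏ c ∈ μ.cells, ((k : ℚ) + (c.2 : ℚ) - (c.1 : ℚ)) / (hookLength μ c.1 c.2 : ℚ)

/-- `μ` is the partition `(l1, l2, 2^{h2-2}, 1^{h1-h2})`: first row `l1`, second row
`l2`, rows `2, …, h2 - 1` of length `2`, rows `h2, …, h1 - 1` of length `1`, and no
other rows; so the first column has height `h1` and the second column height `h2`. -/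
def HasRows2 (μ : YoungDiagram) (l1 l2 h1 h2 : ℕ) : Prop :=
  μ.rowLen 0 = l1 ∧ μ.rowLen 1 = l2 ∧
    (∀ i : ℕ, 2 ≤ i → i < h2 → μ.rowLen i = 2) ∧
    (∀ i : ℕ, h2 ≤ i → i < h1 → μ.rowLen i = 1) ∧
    (∀ i : ℕ, h1 ≤ i → μ.rowLen i = 0)

/-- The product formula of the main theorem. -/
noncomputable def qytFormula (l1 l2 h1 h2 m : ℕ) : ℚ :=
  ((l1 - l2 + 1 : ℕ) : ℚ) / ((m - h2 + 1 : ℕ) : ℚ) *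
    ((l1 + h1 - 2).choose (m - h2) : ℚ) * ((l2 + h1 - 3).choose (m - h2) : ℚ) *
    ((m - h2).choose (m - h1) : ℚ) * ((l2 + h2 - 4).choose (h2 - 2) : ℚ) *
    ((l1 + h2 - 3).choose (h2 - 2) : ℚ) / (((h1 - 1).choose (h2 - 2) : ℕ) : ℚ)

/-!
Consider a corner of the shape in column `c`, and the tableaux with maximal entry `M` whose
rightmost maximal entry sits in that corner. Removing the corner is injective on them, and the
remaining tableau is quasi-Yamanouchi: either it still contains `M`, only strictly left of column
`c`, or its maximum is `M - 1` and some entry `M - 1` lies weakly right of column `c`. Classifying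
all tableaux by the corner that holds the rightmost maximal entry, the number of tableaux with
largest entry `M` satisfies a linear recursion in the shape and `M`.

In Frobenius coordinates the product formula is a product of factorials and reciprocal factorials
and satisfies the same recursion as a polynomial identity. It vanishes when two arms or two legs
coincide, and when `b = -1` or `d = -1`, so cells that are not corners need no separate treatment.
Only the shape `(a, 0 | c, 0)` is exceptional: removing the cell `(1, 1)` leaves a hook, all of
whose quasi-Yamanouchi tableaux have the same largest entry.
-/

section Restriction

variable {μ ν : YoungDiagram}

/-- The restriction of a semistandard tableau to a smaller Young diagram. -/
def restrictShape (hle : ν ≤ μ) (T : SemistandardYoungTableau μ) : SemistandardYoungTableau ν where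
  entry i j := if (i, j) ∈ ν then T i j else 0
  row_weak' hj hcell := by
    rw [if_pos hcell, if_pos (ν.up_left_mem le_rfl hj.le hcell)]
    exact T.row_weak hj (hle hcell)
  col_strict' hi hcell := by
    rw [if_pos hcell, if_pos (ν.up_left_mem hi.le le_rfl hcell)]
    exact T.col_strict hi (hle hcell)
  zeros' hcell := if_neg hcell

lemma restrictShape_apply (hle : ν ≤ μ) (T : SemistandardYoungTableau μ) {i j : ℕ}
    (hcell : (i, j) ∈ ν) : restrictShape hle T i j = T i j :=
  if_pos hcell

end Restriction

/-- `μ` is obtained from `ν` by adding the single cell `(r, c)`, which is then a corner of `μ`. -/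
structure AddsCell (ν μ : YoungDiagram) (r c : ℕ) : Prop where
  notMem : (r, c) ∉ ν
  mem_iff : ∀ i j : ℕ, (i, j) ∈ μ ↔ (i, j) ∈ ν ∨ (i = r ∧ j = c)

namespace AddsCell

variable {μ ν : YoungDiagram} {r c i i' j j' : ℕ}

lemma le (h : AddsCell ν μ r c) : ν ≤ μ := fun _ hcell ↦ (h.mem_iff _ _).2 (.inl hcell)

lemma mem (h : AddsCell ν μ r c) : (r, c) ∈ μ := (h.mem_iff r c).2 (.inr ⟨rfl, rfl⟩)

lemma row_lt (h : AddsCell ν μ r c) (hcell : (i, c) ∈ ν) : i < r := by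
  by_contra! hri
  exact h.notMem (ν.up_left_mem hri le_rfl hcell)

lemma mem_of_lt_col (h : AddsCell ν μ r c) (hj : j < j') (hcell : (i, j') ∈ μ) : (i, j) ∈ ν := by
  rcases (h.mem_iff i j).1 (μ.up_left_mem le_rfl hj.le hcell) with hν | ⟨rfl, rfl⟩
  · exact hν
  · exact ν.up_left_mem le_rfl hj.le (((h.mem_iff _ _).1 hcell).resolve_right fun e ↦ hj.ne' e.2)

lemma mem_of_lt_row (h : AddsCell ν μ r c) (hi : i < i') (hcell : (i', j) ∈ μ) : (i, j) ∈ ν := by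
  rcases (h.mem_iff i j).1 (μ.up_left_mem hi.le le_rfl hcell) with hν | ⟨rfl, rfl⟩
  · exact hν
  · exact ν.up_left_mem hi.le le_rfl (((h.mem_iff _ _).1 hcell).resolve_right fun e ↦ hi.ne' e.1)

lemma ne_of_mem (h : AddsCell ν μ r c) (hcell : (i, j) ∈ ν) : ¬(i = r ∧ j = c) := by
  rintro ⟨rfl, rfl⟩
  exact h.notMem hcell

/-- The extension of a tableau of shape `ν` by the entry `m` in the added cell `(r, c)`. -/
def extend (h : AddsCell ν μ r c) (S : SemistandardYoungTableau ν) (m : ℕ)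
    (hrow : ∀ j, (r, j) ∈ ν → S r j ≤ m) (hcol : ∀ i, (i, c) ∈ ν → S i c < m) :
    SemistandardYoungTableau μ where
  entry i j := if i = r ∧ j = c then m else S i j
  row_weak' hj hcell := by
    have hleft := h.mem_of_lt_col hj hcell
    rw [if_neg (h.ne_of_mem hleft)]
    split_ifs with hrc
    · obtain ⟨rfl, rfl⟩ := hrc
      exact hrow _ hleft
    · exact S.row_weak hj (((h.mem_iff _ _).1 hcell).resolve_right hrc)
  col_strict' hi hcell := by
    have habove := h.mem_of_lt_row hi hcell
    rw [if_neg (h.ne_of_mem habove)]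
    split_ifs with hrc
    · obtain ⟨rfl, rfl⟩ := hrc
      exact hcol _ habove
    · exact S.col_strict hi (((h.mem_iff _ _).1 hcell).resolve_right hrc)
  zeros' {i j} hcell := by
    have hcell' := mt (h.mem_iff i j).2 hcell
    rw [if_neg fun hrc ↦ hcell' (.inr hrc)]
    exact S.zeros fun hν ↦ hcell' (.inl hν)

lemma extend_apply_corner (h : AddsCell ν μ r c) (S : SemistandardYoungTableau ν) (m : ℕ)
    (hrow : ∀ j, (r, j) ∈ ν → S r j ≤ m) (hcol : ∀ i, (i, c) ∈ ν → S i c < m) :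
    h.extend S m hrow hcol r c = m :=
  if_pos ⟨rfl, rfl⟩

lemma restrictShape_extend (h : AddsCell ν μ r c) (S : SemistandardYoungTableau ν) (m : ℕ)
    (hrow : ∀ j, (r, j) ∈ ν → S r j ≤ m) (hcol : ∀ i, (i, c) ∈ ν → S i c < m) :
    restrictShape h.le (h.extend S m hrow hcol) = S := by
  ext i j
  by_cases hcell : (i, j) ∈ ν
  · rw [restrictShape_apply h.le _ hcell]
    exact if_neg (h.ne_of_mem hcell)
  · rw [SemistandardYoungTableau.zeros _ hcell, S.zeros hcell]

lemma eq_of_restrictShape_eq (h : AddsCell ν μ r c) {T T' : SemistandardYoungTableau μ}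
    (hres : restrictShape h.le T = restrictShape h.le T') (hcorner : T r c = T' r c) : T = T' := by
  ext i j
  by_cases hμ : (i, j) ∈ μ
  · rcases (h.mem_iff i j).1 hμ with hν | ⟨rfl, rfl⟩
    · rw [← restrictShape_apply h.le T hν, hres, restrictShape_apply h.le T' hν]
    · exact hcorner
  · rw [T.zeros hμ, T'.zeros hμ]

end AddsCell

/-- The quasi-Yamanouchi tableaux of shape `μ` whose largest entry is exactly `M`, with the 0-based
entries of `IsQY`. The bound is an integer so that it can be lowered without truncation. -/
def qyMax (μ : YoungDiagram) (M : ℤ) : Set (SemistandardYoungTableau μ) :=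
  {T | IsQY μ T ∧ (∀ i j : ℕ, (i, j) ∈ μ → (T i j : ℤ) ≤ M) ∧
    ∃ i j : ℕ, (i, j) ∈ μ ∧ (T i j : ℤ) = M}

/-- The tableaux in `qyMax μ M` all of whose entries `M` lie strictly left of column `k`. -/
def qyMaxLeft (μ : YoungDiagram) (M : ℤ) (k : ℕ) : Set (SemistandardYoungTableau μ) :=
  {T ∈ qyMax μ M | ∀ i j : ℕ, (i, j) ∈ μ → (T i j : ℤ) = M → j < k}

/-- The number of tableaux in `qyMax μ M`. -/
noncomputable def qyMaxCount (μ : YoungDiagram) (M : ℤ) : ℚ := (qyMax μ M).ncard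

/-- The number of tableaux in `qyMaxLeft μ M k`. -/
noncomputable def qyMaxLeftCount (μ : YoungDiagram) (M : ℤ) (k : ℕ) : ℚ :=
  (qyMaxLeft μ M k).ncard

lemma QYTeq_eq_qyMaxCount (μ : YoungDiagram) {m : ℕ} (hm : 1 ≤ m) :
    (QYTeq μ m : ℚ) = qyMaxCount μ ((m : ℤ) - 1) := by
  have hset : {T : SemistandardYoungTableau μ | IsQY μ T ∧ MaxEq μ T m} =
      qyMax μ ((m : ℤ) - 1) := by
    ext T
    refine and_congr_right fun _ ↦ and_congr ?_ ?_
    · exact forall₃_congr fun i j _ ↦ by omega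
    · exact exists₂_congr fun i j ↦ and_congr_right fun _ ↦ by omega
  rw [qyMaxCount, ← hset]
  rfl

section Counting

variable {μ : YoungDiagram} {M : ℤ} {k l : ℕ}

lemma qyMax_finite (μ : YoungDiagram) (M : ℤ) : (qyMax μ M).Finite := by
  let entries (T : qyMax μ M) (p : μ.cells) : Fin (M.toNat + 1) :=
    ⟨T.1 p.1.1 p.1.2, by have := T.2.2.1 p.1.1 p.1.2 p.2; omega⟩
  refine Set.finite_coe_iff.1 (Finite.of_injective entries fun T T' h ↦ ?_)
  ext i j
  by_cases hij : (i, j) ∈ μ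
  · exact congrArg Fin.val (congrFun h ⟨(i, j), hij⟩)
  · rw [T.1.zeros hij, T'.1.zeros hij]

lemma qyMaxLeft_subset_qyMax (μ : YoungDiagram) (M : ℤ) (k : ℕ) : qyMaxLeft μ M k ⊆ qyMax μ M :=
  Set.sep_subset _ _

lemma qyMaxLeft_finite (μ : YoungDiagram) (M : ℤ) (k : ℕ) : (qyMaxLeft μ M k).Finite :=
  (qyMax_finite μ M).subset (qyMaxLeft_subset_qyMax μ M k)

lemma qyMaxLeft_mono (μ : YoungDiagram) (M : ℤ) (h : k ≤ l) : qyMaxLeft μ M k ⊆ qyMaxLeft μ M l :=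
  fun _ hT ↦ ⟨hT.1, fun i j hij hM ↦ (hT.2 i j hij hM).trans_le h⟩

lemma qyMaxLeftCount_zero (μ : YoungDiagram) (M : ℤ) : qyMaxLeftCount μ M 0 = 0 := by
  have hempty : qyMaxLeft μ M 0 = ∅ := by
    rw [Set.eq_empty_iff_forall_notMem]
    rintro T ⟨⟨_, _, i, j, hij, hM⟩, hleft⟩
    exact absurd (hleft i j hij hM) j.not_lt_zero
  rw [qyMaxLeftCount, hempty, Set.ncard_empty, Nat.cast_zero]

lemma qyMaxLeftCount_eq_qyMaxCount (hk : (0, k) ∉ μ) : qyMaxLeftCount μ M k = qyMaxCount μ M := by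
  have hset : qyMaxLeft μ M k = qyMax μ M :=
    Set.sep_eq_self_iff_mem_true.2 fun T _ i j hij _ ↦ by
      by_contra! hkj
      exact hk (μ.up_left_mem i.zero_le hkj hij)
  rw [qyMaxLeftCount, hset, qyMaxCount]

lemma qyMaxLeftCount_succ_of_no_corner
    (hcorner : ∀ i, (i, k) ∈ μ → (i + 1, k) ∈ μ ∨ (i, k + 1) ∈ μ) :
    qyMaxLeftCount μ M (k + 1) = qyMaxLeftCount μ M k := by
  have hset : qyMaxLeft μ M (k + 1) = qyMaxLeft μ M k := by
    refine Set.Subset.antisymm (fun T hT ↦ ⟨hT.1, fun i j hij hM ↦ ?_⟩)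
      (qyMaxLeft_mono μ M k.le_succ)
    obtain ⟨⟨_, hmax, _⟩, hleft⟩ := hT
    refine lt_of_le_of_ne (Nat.lt_succ_iff.1 (hleft i j hij hM)) ?_
    rintro rfl
    rcases hcorner i hij with hbelow | hright
    · have := T.col_strict (Nat.lt_add_one i) hbelow
      have := hmax _ _ hbelow
      omega
    · have := T.row_weak (Nat.lt_add_one j) hright
      have := hmax _ _ hright
      have := hleft _ _ hright (by omega)
      omega
  rw [qyMaxLeftCount, hset, qyMaxLeftCount]

lemma qyMaxLeftCount_eq_of_no_corner (hkl : k ≤ l)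
    (hcorner : ∀ i j, k ≤ j → j < l → (i, j) ∈ μ → (i + 1, j) ∈ μ ∨ (i, j + 1) ∈ μ) :
    qyMaxLeftCount μ M l = qyMaxLeftCount μ M k := by
  induction l, hkl using Nat.le_induction with
  | base => rfl
  | succ l hkl ih =>
    rw [qyMaxLeftCount_succ_of_no_corner fun i ↦ hcorner i l hkl l.lt_succ_self,
      ih fun i j hkj hjl ↦ hcorner i j hkj (hjl.trans l.lt_succ_self)]

end Counting

lemma IsQY.apply_zero_zero {μ : YoungDiagram} {T : SemistandardYoungTableau μ} (hT : IsQY μ T) :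
    T 0 0 = 0 := by
  by_cases h0 : (0, 0) ∈ μ
  · by_contra hne
    obtain ⟨_, _, i, j, _, hij, _, hpred, _⟩ :=
      hT (T 0 0) (Nat.pos_of_ne_zero hne) ⟨0, 0, h0, rfl⟩
    have := T.row_weak_of_le j.zero_le (μ.up_left_mem i.zero_le le_rfl hij)
    have := T.col_weak i.zero_le hij
    omega
  · exact T.zeros h0

namespace AddsCell

variable {μ ν : YoungDiagram} {M : ℤ} {r c : ℕ} {T : SemistandardYoungTableau μ}

lemma corner_eq_max (h : AddsCell ν μ r c)
    (hT : T ∈ qyMaxLeft μ M (c + 1) \ qyMaxLeft μ M c) : (T r c : ℤ) = M := by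
  obtain ⟨⟨hqy, hleft⟩, hnot⟩ := hT
  obtain ⟨i, j, hij, hM, hcj⟩ : ∃ i j, (i, j) ∈ μ ∧ (T i j : ℤ) = M ∧ c ≤ j := by
    by_contra! hall
    exact hnot ⟨hqy, hall⟩
  obtain rfl : j = c := by
    have := hleft i j hij hM
    omega
  rcases (h.mem_iff i j).1 hij with hν | ⟨rfl, -⟩
  · have := T.col_strict (h.row_lt hν) h.mem
    have := hqy.2.1 _ _ h.mem
    omega
  · exact hM

lemma isQY_restrictShape (h : AddsCell ν μ r c) (hT : T ∈ qyMaxLeft μ M (c + 1))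
    (hcorner : (T r c : ℤ) = M) : IsQY ν (restrictShape h.le T) := by
  obtain ⟨⟨hqy, hmax, _⟩, hleft⟩ := hT
  rintro v hv ⟨p, q, hpq, hpv⟩
  rw [restrictShape_apply h.le T hpq] at hpv
  obtain ⟨i, j, i', j', hij, hij', hiv, hiv', hjj'⟩ := hqy v hv ⟨p, q, h.le hpq, hpv⟩
  have hij'ν : (i', j') ∈ ν := by
    refine ((h.mem_iff i' j').1 hij').resolve_right ?_
    rintro ⟨rfl, rfl⟩
    have := hmax i j hij
    omega
  have hpred : restrictShape h.le T i' j' = v - 1 := by rwa [restrictShape_apply h.le T hij'ν]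
  rcases (h.mem_iff i j).1 hij with hijν | ⟨rfl, rfl⟩
  · exact ⟨i, j, i', j', hijν, hij'ν, by rwa [restrictShape_apply h.le T hijν], hpred, hjj'⟩
  -- The corner holds the rightmost maximum, so any other maximum serves as well.
  · refine ⟨p, q, i', j', hpq, hij'ν, by rwa [restrictShape_apply h.le T hpq], hpred, ?_⟩
    have := hleft p q (h.le hpq) (by omega)
    omega

lemma isQY_of_restrictShape (h : AddsCell ν μ r c) (hres : IsQY ν (restrictShape h.le T))
    (hcorner : (∃ i j, (i, j) ∈ ν ∧ T i j = T r c) ∨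
      ∃ i j, (i, j) ∈ ν ∧ T i j = T r c - 1 ∧ c ≤ j) : IsQY μ T := by
  have of_mem : ∀ v : ℕ, 0 < v → (∃ i j : ℕ, (i, j) ∈ ν ∧ T i j = v) → ∃ i j i' j' : ℕ,
      (i, j) ∈ μ ∧ (i', j') ∈ μ ∧ T i j = v ∧ T i' j' = v - 1 ∧ j ≤ j' := by
    rintro v hv ⟨p, q, hpq, hpv⟩
    obtain ⟨i, j, i', j', hij, hij', hiv, hiv', hjj'⟩ :=
      hres v hv ⟨p, q, hpq, by rwa [restrictShape_apply h.le T hpq]⟩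
    rw [restrictShape_apply h.le T hij] at hiv
    rw [restrictShape_apply h.le T hij'] at hiv'
    exact ⟨i, j, i', j', h.le hij, h.le hij', hiv, hiv', hjj'⟩
  rintro v hv ⟨p, q, hpq, hpv⟩
  rcases (h.mem_iff p q).1 hpq with hν | ⟨rfl, rfl⟩
  · exact of_mem v hv ⟨p, q, hν, hpv⟩
  · subst hpv
    rcases hcorner with hsame | ⟨i, j, hij, hpred, hqj⟩
    · exact of_mem _ hv hsame
    · exact ⟨p, q, i, j, h.mem, h.le hij, rfl, hpred, hqj⟩

lemma restrictShape_mem (h : AddsCell ν μ r c) (h0 : (0, 0) ∈ ν)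
    (hT : T ∈ qyMaxLeft μ M (c + 1)) (hcorner : (T r c : ℤ) = M) :
    restrictShape h.le T ∈ qyMaxLeft ν M c ∪ (qyMax ν (M - 1) \ qyMaxLeft ν (M - 1) c) := by
  have hqyν := h.isQY_restrictShape hT hcorner
  obtain ⟨⟨hqy, hmax, _⟩, hleft⟩ := hT
  have hres : ∀ i j, (i, j) ∈ ν → restrictShape h.le T i j = T i j :=
    fun i j ↦ restrictShape_apply h.le T
  by_cases hM : ∃ i j, (i, j) ∈ ν ∧ (T i j : ℤ) = M
  · obtain ⟨i, j, hij, hiM⟩ := hM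
    refine .inl ⟨⟨hqyν, fun p q hpq ↦ ?_, i, j, hij, by rwa [hres i j hij]⟩, fun p q hpq hpM ↦ ?_⟩
    · rw [hres p q hpq]
      exact hmax p q (h.le hpq)
    · rw [hres p q hpq] at hpM
      refine lt_of_le_of_ne (Nat.lt_succ_iff.1 (hleft p q (h.le hpq) hpM)) ?_
      rintro rfl
      have := T.col_strict (h.row_lt hpq) h.mem
      omega
  · push Not at hM
    have hlt : ∀ i j, (i, j) ∈ ν → (T i j : ℤ) < M := fun i j hij ↦
      lt_of_le_of_ne (hmax i j (h.le hij)) (hM i j hij)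
    have := hlt 0 0 h0
    obtain ⟨i, j, i', j', hij, hij', hiv, hiv', hjj'⟩ := hqy (T r c) (by omega) ⟨r, c, h.mem, rfl⟩
    obtain ⟨rfl, rfl⟩ : i = r ∧ j = c := ((h.mem_iff i j).1 hij).resolve_left fun hν ↦ by
      have := hlt i j hν
      omega
    have hij'ν : (i', j') ∈ ν := ((h.mem_iff i' j').1 hij').resolve_right fun e ↦ by
      rw [e.1, e.2] at hiv'
      omega
    have hpred : (restrictShape h.le T i' j' : ℤ) = M - 1 := by
      rw [hres i' j' hij'ν]
      omega
    refine .inr ⟨⟨hqyν, fun p q hpq ↦ ?_, i', j', hij'ν, hpred⟩, fun hmem ↦ ?_⟩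
    · rw [hres p q hpq]
      have := hlt p q hpq
      omega
    · have := hmem.2 i' j' hij'ν hpred
      omega

lemma mem_of_restrictShape_mem (h : AddsCell ν μ r c) (hcorner : (T r c : ℤ) = M)
    (hT : restrictShape h.le T ∈ qyMaxLeft ν M c ∪ (qyMax ν (M - 1) \ qyMaxLeft ν (M - 1) c)) :
    T ∈ qyMaxLeft μ M (c + 1) \ qyMaxLeft μ M c := by
  have hres : ∀ i j, (i, j) ∈ ν → restrictShape h.le T i j = T i j :=
    fun i j ↦ restrictShape_apply h.le T
  obtain ⟨hqy, hν⟩ : IsQY μ T ∧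
      ∀ i j, (i, j) ∈ ν → (T i j : ℤ) ≤ M ∧ ((T i j : ℤ) = M → j < c) := by
    rcases hT with ⟨⟨hqyν, hmax, i, j, hij, hiM⟩, hleft⟩ | ⟨⟨hqyν, hmax, hex⟩, hnot⟩
    · rw [hres i j hij] at hiM
      refine ⟨h.isQY_of_restrictShape hqyν (.inl ⟨i, j, hij, by omega⟩), fun p q hpq ↦ ?_⟩
      rw [← hres p q hpq]
      exact ⟨hmax p q hpq, hleft p q hpq⟩
    · obtain ⟨i, j, hij, hpred, hcj⟩ : ∃ i j, (i, j) ∈ ν ∧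
          (restrictShape h.le T i j : ℤ) = M - 1 ∧ c ≤ j := by
        by_contra! hall
        exact hnot ⟨⟨hqyν, hmax, hex⟩, hall⟩
      rw [hres i j hij] at hpred
      refine ⟨h.isQY_of_restrictShape hqyν (.inr ⟨i, j, hij, by omega, hcj⟩), fun p q hpq ↦ ?_⟩
      have := hmax p q hpq
      rw [hres p q hpq] at this
      constructor <;> omega
  refine ⟨⟨⟨hqy, fun i j hij ↦ ?_, r, c, h.mem, hcorner⟩, fun i j hij hM ↦ ?_⟩,
    fun hmem ↦ (hmem.2 r c h.mem hcorner).false⟩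
  · rcases (h.mem_iff i j).1 hij with hijν | ⟨rfl, rfl⟩
    · exact (hν i j hijν).1
    · exact hcorner.le
  · rcases (h.mem_iff i j).1 hij with hijν | ⟨rfl, rfl⟩
    · exact ((hν i j hijν).2 hM).trans (Nat.lt_add_one c)
    · exact Nat.lt_add_one j

lemma exists_restrictShape_eq (h : AddsCell ν μ r c) {S : SemistandardYoungTableau ν}
    (hS : S ∈ qyMaxLeft ν M c ∪ (qyMax ν (M - 1) \ qyMaxLeft ν (M - 1) c)) :
    ∃ T : SemistandardYoungTableau μ, restrictShape h.le T = S ∧ (T r c : ℤ) = M := by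
  obtain ⟨hM, hle, hcol⟩ : 0 ≤ M ∧ (∀ i j, (i, j) ∈ ν → (S i j : ℤ) ≤ M) ∧
      ∀ i, (i, c) ∈ ν → (S i c : ℤ) < M := by
    rcases hS with ⟨⟨_, hmax, i, j, _, hiM⟩, hleft⟩ | ⟨⟨_, hmax, i, j, _, hiM⟩, _⟩
    · exact ⟨by omega, hmax, fun i hi ↦
        lt_of_le_of_ne (hmax i c hi) fun e ↦ (hleft i c hi e).false⟩
    · exact ⟨by omega, fun i j hij ↦ by have := hmax i j hij; omega,
        fun i hi ↦ by have := hmax i c hi; omega⟩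
  lift M to ℕ using hM
  refine ⟨h.extend S M (fun j hj ↦ ?_) (fun i hi ↦ ?_), h.restrictShape_extend .., ?_⟩
  · exact_mod_cast hle r j hj
  · exact_mod_cast hcol i hi
  · rw [h.extend_apply_corner]

lemma bijOn_restrictShape (h : AddsCell ν μ r c) (h0 : (0, 0) ∈ ν) (M : ℤ) :
    Set.BijOn (restrictShape h.le) (qyMaxLeft μ M (c + 1) \ qyMaxLeft μ M c)
      (qyMaxLeft ν M c ∪ (qyMax ν (M - 1) \ qyMaxLeft ν (M - 1) c)) := by
  refine ⟨fun T hT ↦ h.restrictShape_mem h0 hT.1 (h.corner_eq_max hT),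
    fun T hT T' hT' hres ↦ h.eq_of_restrictShape_eq hres ?_, fun S hS ↦ ?_⟩
  · have := h.corner_eq_max hT
    have := h.corner_eq_max hT'
    omega
  · obtain ⟨T, rfl, hcorner⟩ := h.exists_restrictShape_eq hS
    exact ⟨T, h.mem_of_restrictShape_mem hcorner hS, rfl⟩

theorem qyMaxLeftCount_succ (h : AddsCell ν μ r c) (h0 : (0, 0) ∈ ν) (M : ℤ) :
    qyMaxLeftCount μ M (c + 1) = qyMaxLeftCount μ M c + qyMaxLeftCount ν M c +
      qyMaxCount ν (M - 1) - qyMaxLeftCount ν (M - 1) c := by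
  have hdisj : Disjoint (qyMaxLeft ν M c) (qyMax ν (M - 1) \ qyMaxLeft ν (M - 1) c) := by
    refine Set.disjoint_left.2 ?_
    rintro T ⟨⟨_, _, i, j, hij, hM⟩, _⟩ ⟨⟨_, hmax, _⟩, _⟩
    have := hmax i j hij
    omega
  have hcard := (h.bijOn_restrictShape h0 M).ncard_eq
  rw [Set.ncard_union_eq hdisj (qyMaxLeft_finite ν M c) ((qyMax_finite ν (M - 1)).sdiff)] at hcard
  have hμ := Set.ncard_sdiff_add_ncard_of_subset (qyMaxLeft_mono μ M c.le_succ)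
    (qyMaxLeft_finite μ M (c + 1))
  have hν := Set.ncard_sdiff_add_ncard_of_subset (qyMaxLeft_subset_qyMax ν (M - 1) c)
    (qyMax_finite ν (M - 1))
  simp only [qyMaxLeftCount, qyMaxCount]
  rw [← hν, ← hμ, hcard]
  push_cast
  ring

lemma qyMaxCount_of_row_zero (h : AddsCell ν μ 0 c) {k : ℕ} (h0 : (0, 0) ∈ ν) (hkc : k ≤ c)
    (hk : (1, k) ∉ μ) (M : ℤ) : qyMaxCount μ M = qyMaxLeftCount μ M k + qyMaxCount ν M := by
  have hnot : (0, c + 1) ∉ μ := fun hmem ↦ by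
    rcases (h.mem_iff _ _).1 hmem with hν | ⟨_, hc⟩
    · exact h.notMem (ν.up_left_mem le_rfl c.le_succ hν)
    · omega
  have hcorner : ∀ i j, k ≤ j → j < c → (i, j) ∈ μ → (i + 1, j) ∈ μ ∨ (i, j + 1) ∈ μ := by
    intro i j hkj hjc hij
    rcases i with _ | i
    · exact .inr (μ.up_left_mem le_rfl hjc h.mem)
    · exact absurd (μ.up_left_mem (by omega) hkj hij) hk
  have hsucc := h.qyMaxLeftCount_succ h0 M
  rw [qyMaxLeftCount_eq_qyMaxCount hnot, qyMaxLeftCount_eq_qyMaxCount h.notMem,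
    qyMaxLeftCount_eq_qyMaxCount h.notMem, qyMaxLeftCount_eq_of_no_corner hkc hcorner] at hsucc
  rw [hsucc, add_sub_cancel_right]

lemma qyMaxLeftCount_one_of_col_zero (h : AddsCell ν μ r 0) (h0 : (0, 0) ∈ ν) (M : ℤ) :
    qyMaxLeftCount μ M 1 = qyMaxCount ν (M - 1) := by
  rw [h.qyMaxLeftCount_succ h0, qyMaxLeftCount_zero, qyMaxLeftCount_zero, qyMaxLeftCount_zero]
  ring

lemma qyMaxLeftCount_succ_of_row_one {ν' : YoungDiagram} {k : ℕ} (h : AddsCell ν μ 1 k)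
    (h' : AddsCell ν' ν 0 c) (h0 : (0, 0) ∈ ν') (hkc : k ≤ c) (M : ℤ) :
    qyMaxLeftCount μ M (k + 1) = qyMaxLeftCount μ M k +
      (qyMaxCount ν M + qyMaxCount ν' (M - 1) - qyMaxCount ν' M) := by
  rw [h.qyMaxLeftCount_succ (h'.le h0), h'.qyMaxCount_of_row_zero h0 hkc h.notMem M,
    h'.qyMaxCount_of_row_zero h0 hkc h.notMem (M - 1)]
  ring

lemma qyMaxLeftCount_two_of_col_one {ν' : YoungDiagram} {s : ℕ} (h : AddsCell ν μ r 1)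
    (h' : AddsCell ν' ν s 0) (h0 : (0, 0) ∈ ν') (M : ℤ) :
    qyMaxLeftCount μ M 2 = qyMaxLeftCount μ M 1 +
      (qyMaxCount ν (M - 1) + qyMaxCount ν' (M - 1) - qyMaxCount ν' (M - 2)) := by
  rw [h.qyMaxLeftCount_succ (h'.le h0), h'.qyMaxLeftCount_one_of_col_zero h0 M,
    h'.qyMaxLeftCount_one_of_col_zero h0 (M - 1), sub_sub, one_add_one_eq_two]
  ring

end AddsCell

/-- The factorial extended by `0` to the negative integers. Since `0⁻¹ = 0`, its inverse is the
reciprocal factorial `1 / Γ(k + 1)`, which vanishes at the negative integers. -/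
noncomputable def intFactorial (k : ℤ) : ℚ := if 0 ≤ k then k.toNat.factorial else 0

lemma intFactorial_natCast (n : ℕ) : intFactorial n = n.factorial := if_pos (Int.natCast_nonneg n)

lemma intFactorial_zero : intFactorial 0 = 1 := by simp [intFactorial]

lemma intFactorial_of_neg {k : ℤ} (hk : k < 0) : intFactorial k = 0 := if_neg hk.not_ge

lemma intFactorial_ne_zero {k : ℤ} (hk : 0 ≤ k) : intFactorial k ≠ 0 := by
  lift k to ℕ using hk
  rw [intFactorial_natCast]
  exact_mod_cast k.factorial_ne_zero

lemma intFactorial_eq_mul {k : ℤ} (hk : 1 ≤ k) : intFactorial k = k * intFactorial (k - 1) := by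
  obtain ⟨n, rfl⟩ : ∃ n : ℕ, k = (n + 1 : ℕ) := ⟨(k - 1).toNat, by omega⟩
  rw [intFactorial_natCast, Nat.factorial_succ, Nat.cast_succ, add_sub_cancel_right,
    intFactorial_natCast]
  push_cast
  rfl

lemma inv_intFactorial_sub_one (k : ℤ) : (intFactorial (k - 1))⁻¹ = k * (intFactorial k)⁻¹ := by
  rcases lt_trichotomy k 0 with hk | rfl | hk
  · rw [intFactorial_of_neg hk, intFactorial_of_neg (by omega), inv_zero, mul_zero]
  · rw [intFactorial_of_neg (by omega), inv_zero, Int.cast_zero, zero_mul]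
  · have hk' : (k : ℚ) ≠ 0 := by exact_mod_cast hk.ne'
    rw [intFactorial_eq_mul hk, mul_inv, mul_inv_cancel_left₀ hk']

lemma natCast_choose_eq_intFactorial (n k : ℕ) :
    (n.choose k : ℚ) = intFactorial n * (intFactorial k)⁻¹ * (intFactorial (n - k))⁻¹ := by
  rcases le_or_gt k n with hkn | hnk
  · rw [← Nat.cast_sub hkn, intFactorial_natCast, intFactorial_natCast, intFactorial_natCast,
      Nat.cast_choose ℚ hkn, div_eq_mul_inv, mul_inv, mul_assoc]
  · rw [Nat.choose_eq_zero_of_lt hnk, intFactorial_of_neg (k := (n : ℤ) - k) (by omega), inv_zero,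
      mul_zero, Nat.cast_zero]

/-- The product in `doubleHookFormula`, with the four factorials that depend on the largest entry
taken at independent arguments, so that a shift of `M` becomes a shift of `p`, `q`, `r`, `s`. -/
noncomputable def doubleHookWeight (a b c d p q r s : ℤ) : ℚ :=
  (a - b) * (c - d) *
    (intFactorial (a + c) * intFactorial (b + c) * intFactorial (b + d) * intFactorial (a + d)) *
    ((intFactorial a)⁻¹ * (intFactorial b)⁻¹ * (intFactorial c)⁻¹ * (intFactorial d)⁻¹) *
    ((intFactorial p)⁻¹ * (intFactorial q)⁻¹ * (intFactorial r)⁻¹ * (intFactorial s)⁻¹)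

/-- The product formula for tableaux of shape `(a, b | c, d)` in Frobenius coordinates and with
largest 0-based entry `M`. -/
noncomputable def doubleHookFormula (a b c d M : ℤ) : ℚ :=
  doubleHookWeight a b c d (M - d) (M - c) (a + c + d + 1 - M) (b + c + d + 1 - M)

lemma doubleHookWeight_rec {a b c d p q r s : ℤ} (hac : 1 ≤ a + c) (hbc : 1 ≤ b + c)
    (hbd : 1 ≤ b + d) (had : 1 ≤ a + d) (hpr : r = a + c + 1 - p) (hqs : s = b + d + 1 - q)
    (hpq : q = p + d - c) :
    doubleHookWeight a b c d p q r s =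
      doubleHookWeight (a - 1) b c d p q (r - 1) s +
        doubleHookWeight a b (c - 1) d (p - 1) q r s +
        (doubleHookWeight a (b - 1) c d p q r (s - 1) +
          doubleHookWeight (a - 1) (b - 1) c d (p - 1) (q - 1) r s -
          doubleHookWeight (a - 1) (b - 1) c d p q (r - 1) (s - 1)) +
        (doubleHookWeight a b c (d - 1) p (q - 1) r s +
          doubleHookWeight a b (c - 1) (d - 1) p q (r - 1) (s - 1) -
          doubleHookWeight a b (c - 1) (d - 1) (p - 1) (q - 1) r s) := by
  have sub_add : ∀ x y : ℤ, x - 1 + y = x + y - 1 := fun x y ↦ by ring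
  have add_sub : ∀ x y : ℤ, x + (y - 1) = x + y - 1 := fun x y ↦ by ring
  simp only [doubleHookWeight, sub_add, add_sub, inv_intFactorial_sub_one,
    intFactorial_eq_mul hac, intFactorial_eq_mul hbc, intFactorial_eq_mul hbd,
    intFactorial_eq_mul had]
  have hr : (r : ℚ) = a + c + 1 - p := by exact_mod_cast hpr
  have hs : (s : ℚ) = b + d + 1 - q := by exact_mod_cast hqs
  have hq : (q : ℚ) = p + d - c := by exact_mod_cast hpq
  push_cast
  rw [hr, hs, hq]
  ring

theorem doubleHookFormula_rec {a b c d : ℤ} (hac : 1 ≤ a + c) (hbc : 1 ≤ b + c)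
    (hbd : 1 ≤ b + d) (had : 1 ≤ a + d) (M : ℤ) :
    doubleHookFormula a b c d M =
      doubleHookFormula (a - 1) b c d M + doubleHookFormula a b (c - 1) d (M - 1) +
        (doubleHookFormula a (b - 1) c d M + doubleHookFormula (a - 1) (b - 1) c d (M - 1) -
          doubleHookFormula (a - 1) (b - 1) c d M) +
        (doubleHookFormula a b c (d - 1) (M - 1) +
          doubleHookFormula a b (c - 1) (d - 1) (M - 1) -
          doubleHookFormula a b (c - 1) (d - 1) (M - 2)) := by
  unfold doubleHookFormula
  convert doubleHookWeight_rec hac hbc hbd had (p := M - d) (q := M - c) (r := a + c + d + 1 - M)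
    (s := b + c + d + 1 - M) (by ring) (by ring) (by ring) using 4 <;> ring_nf

lemma doubleHookFormula_arm_self (a c d M : ℤ) : doubleHookFormula a a c d M = 0 := by
  simp [doubleHookFormula, doubleHookWeight]

lemma doubleHookFormula_leg_self (a b c M : ℤ) : doubleHookFormula a b c c M = 0 := by
  simp [doubleHookFormula, doubleHookWeight]

lemma doubleHookFormula_arm_neg_one (a c d M : ℤ) : doubleHookFormula a (-1) c d M = 0 := by
  simp [doubleHookFormula, doubleHookWeight, intFactorial_of_neg]

lemma doubleHookFormula_leg_neg_one (a b c M : ℤ) : doubleHookFormula a b c (-1) M = 0 := by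
  simp [doubleHookFormula, doubleHookWeight, intFactorial_of_neg]

lemma doubleHookFormula_zero_zero {a c : ℤ} (ha : 0 ≤ a) (hc : 0 ≤ c) (M : ℤ) :
    doubleHookFormula a 0 c 0 M = a * c * intFactorial (a + c) * ((intFactorial M)⁻¹ *
      (intFactorial (M - c))⁻¹ * (intFactorial (a + c + 1 - M))⁻¹ *
      (intFactorial (c + 1 - M))⁻¹) := by
  have := intFactorial_ne_zero ha
  have := intFactorial_ne_zero hc
  simp only [doubleHookFormula, doubleHookWeight, Int.cast_zero, sub_zero, add_zero, zero_add,
    intFactorial_zero, inv_one]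
  field_simp

/-- The number of quasi-Yamanouchi tableaux of hook shape `(a | c)` in Frobenius coordinates with
largest 0-based entry `M`. -/
def hookFormula (a c : ℕ) (M : ℤ) : ℚ := if M = c then (a + c).choose a else 0

lemma hookFormula_succ_succ (a c : ℕ) (M : ℤ) :
    hookFormula (a + 1) (c + 1) M = hookFormula (a + 1) c (M - 1) + hookFormula a (c + 1) M := by
  simp only [hookFormula, Nat.cast_succ, sub_eq_iff_eq_add]
  split_ifs
  · rw [add_right_comm a 1 (c + 1), Nat.choose_succ_succ', add_right_comm a 1 c, Nat.cast_add,
      add_comm, add_assoc a c 1]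
  · rw [add_zero]

-- The factors `(M - c)!⁻¹` and `(c - M)!⁻¹` together are the indicator function of `M = c`.
lemma hookFormula_eq_intFactorial (a c : ℕ) (M : ℤ) :
    hookFormula a c M = (a + 1) * intFactorial (a + c) * ((intFactorial M)⁻¹ *
      (intFactorial (M - c))⁻¹ * (intFactorial (a + c + 1 - M))⁻¹ *
      (intFactorial (c - M))⁻¹) := by
  rcases lt_trichotomy M c with hlt | rfl | hgt
  · rw [hookFormula, if_neg hlt.ne, intFactorial_of_neg (k := M - c) (by omega)]
    simp
  · have ha := inv_intFactorial_sub_one ((a : ℤ) + 1)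
    rw [add_sub_cancel_right] at ha
    rw [hookFormula, if_pos rfl, natCast_choose_eq_intFactorial, ha, sub_self, intFactorial_zero,
      show (a : ℤ) + c + 1 - c = a + 1 by ring]
    push_cast
    rw [add_sub_cancel_left]
    ring
  · rw [hookFormula, if_neg hgt.ne', intFactorial_of_neg (k := c - M) (by omega)]
    simp

theorem doubleHookFormula_zero_zero_rec (a c : ℕ) (M : ℤ) :
    doubleHookFormula (a + 1) 0 (c + 1) 0 M =
      doubleHookFormula a 0 (c + 1) 0 M + doubleHookFormula (a + 1) 0 c 0 (M - 1) +
        (hookFormula (a + 1) (c + 1) M + hookFormula a (c + 1) (M - 1) -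
          hookFormula a (c + 1) M) := by
  have hfac := intFactorial_eq_mul (k := (a : ℤ) + c + 2) (by omega)
  have hp := inv_intFactorial_sub_one M
  have hq := inv_intFactorial_sub_one (M - c - 1)
  have hr := inv_intFactorial_sub_one ((a : ℤ) + c + 3 - M)
  have hs := inv_intFactorial_sub_one ((c : ℤ) + 2 - M)
  simp only [hookFormula_eq_intFactorial]
  rw [doubleHookFormula_zero_zero (by omega) (by omega), doubleHookFormula_zero_zero (by omega)
    (by omega), doubleHookFormula_zero_zero (by omega) (by omega)]
  push_cast at hfac hp hq hr hs ⊢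
  ring_nf at hfac hp hq hr hs ⊢
  rw [hfac, hp, hq, hr, hs]
  ring

/-- The rectangular Young diagram with `r` rows of length `s`. -/
def rectangle (r s : ℕ) : YoungDiagram where
  cells := Finset.range r ×ˢ Finset.range s
  isLowerSet := by
    intro p q hqp hp
    simp only [Finset.coe_product, Finset.coe_range, Set.mem_prod, Set.mem_Iio] at hp ⊢
    exact ⟨hqp.1.trans_lt hp.1, hqp.2.trans_lt hp.2⟩

/-- The hook `(a | c)` in Frobenius coordinates, with arm length `a` and leg length `c`. -/
def hook (a c : ℕ) : YoungDiagram := rectangle 1 (a + 1) ⊔ rectangle (c + 1) 1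

/-- The shape `(a, b | c, d)` in Frobenius coordinates: arms `a`, `b` and legs `c`, `d` on the
diagonal cells `(0, 0)` and `(1, 1)`. These are the right coordinates if `b < a` and `d < c`. -/
def doubleHook (a b c d : ℕ) : YoungDiagram :=
  hook a c ⊔ (rectangle 2 (b + 2) ⊔ rectangle (d + 2) 2)

lemma mem_rectangle {r s i j : ℕ} : (i, j) ∈ rectangle r s ↔ i < r ∧ j < s := by
  simp [← YoungDiagram.mem_cells, rectangle]

lemma mem_hook {a c i j : ℕ} : (i, j) ∈ hook a c ↔ i = 0 ∧ j ≤ a ∨ i ≤ c ∧ j = 0 := by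
  simp only [hook, YoungDiagram.mem_sup, mem_rectangle]
  omega

lemma mem_doubleHook {a b c d i j : ℕ} : (i, j) ∈ doubleHook a b c d ↔
    i = 0 ∧ j ≤ a ∨ i ≤ c ∧ j = 0 ∨ i ≤ 1 ∧ j ≤ b + 1 ∨ i ≤ d + 1 ∧ j ≤ 1 := by
  simp only [doubleHook, YoungDiagram.mem_sup, mem_hook, mem_rectangle]
  omega

lemma zero_zero_mem_hook (a c : ℕ) : (0, 0) ∈ hook a c := by simp [mem_hook]

lemma addsCell_hook_arm (a c : ℕ) : AddsCell (hook a c) (hook (a + 1) c) 0 (a + 1) where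
  notMem := by simp only [mem_hook]; omega
  mem_iff i j := by simp only [mem_hook]; omega

lemma addsCell_hook_leg (a c : ℕ) : AddsCell (hook a c) (hook a (c + 1)) (c + 1) 0 where
  notMem := by simp only [mem_hook]; omega
  mem_iff i j := by simp only [mem_hook]; omega

lemma qyMax_hook_zero_zero (M : ℤ) : qyMax (hook 0 0) M =
    if M = 0 then {SemistandardYoungTableau.highestWeight (hook 0 0)} else ∅ := by
  have mem_iff : ∀ i j, (i, j) ∈ hook 0 0 ↔ i = 0 ∧ j = 0 := fun i j ↦ by
    simp only [mem_hook]
    omega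
  ext T
  have hentry : IsQY (hook 0 0) T → ∀ i j, (i, j) ∈ hook 0 0 → T i j = 0 := fun hT i j hij ↦ by
    obtain ⟨rfl, rfl⟩ := (mem_iff i j).1 hij
    exact hT.apply_zero_zero
  split_ifs with hM
  · subst hM
    refine ⟨fun hT ↦ ?_, ?_⟩
    · ext i j
      by_cases hij : (i, j) ∈ hook 0 0
      · rw [hentry hT.1 i j hij, SemistandardYoungTableau.highestWeight_apply, if_pos hij,
          ((mem_iff i j).1 hij).1]
      · rw [T.zeros hij, SemistandardYoungTableau.zeros _ hij]
    · rintro rfl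
      have hzero : ∀ i j, SemistandardYoungTableau.highestWeight (hook 0 0) i j = 0 := fun i j ↦ by
        rw [SemistandardYoungTableau.highestWeight_apply]
        exact ite_eq_right_iff.2 fun hij ↦ ((mem_iff i j).1 hij).1
      refine ⟨fun v hv ⟨i, j, _, hTv⟩ ↦ ?_, fun i j _ ↦ ?_, 0, 0, (mem_iff 0 0).2 ⟨rfl, rfl⟩, ?_⟩
      · rw [hzero] at hTv
        omega
      · rw [hzero, Nat.cast_zero]
      · rw [hzero, Nat.cast_zero]
  · refine iff_of_false (fun ⟨hqy, _, i, j, hij, hTM⟩ ↦ hM ?_) (Set.notMem_empty T)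
    rw [← hTM, hentry hqy i j hij, Nat.cast_zero]

lemma qyMaxCount_hook_zero_zero (M : ℤ) : qyMaxCount (hook 0 0) M = hookFormula 0 0 M := by
  rw [qyMaxCount, qyMax_hook_zero_zero, hookFormula]
  split_ifs <;> simp_all

theorem qyMaxCount_hook (a c : ℕ) (M : ℤ) : qyMaxCount (hook a c) M = hookFormula a c M := by
  induction a generalizing c M with
  | zero =>
    induction c generalizing M with
    | zero => exact qyMaxCount_hook_zero_zero M
    | succ c ihc =>
      have hnot : (0, 1) ∉ hook 0 (c + 1) := by simp [mem_hook]
      rw [← qyMaxLeftCount_eq_qyMaxCount hnot,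
        (addsCell_hook_leg 0 c).qyMaxLeftCount_one_of_col_zero (zero_zero_mem_hook 0 c), ihc]
      simp only [hookFormula, Nat.cast_succ, sub_eq_iff_eq_add, zero_add, Nat.choose_zero_right]
  | succ a iha =>
    have harm (c : ℕ) (M : ℤ) : qyMaxCount (hook (a + 1) c) M =
        qyMaxLeftCount (hook (a + 1) c) M 1 + hookFormula a c M := by
      rw [← iha]
      exact (addsCell_hook_arm a c).qyMaxCount_of_row_zero (zero_zero_mem_hook a c) (by omega)
        (by simp [mem_hook]) M
    induction c generalizing M with
    | zero =>
      have hcorner : ∀ i, (i, 0) ∈ hook (a + 1) 0 →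
          (i + 1, 0) ∈ hook (a + 1) 0 ∨ (i, 1) ∈ hook (a + 1) 0 := by
        simp only [mem_hook]
        omega
      rw [harm, qyMaxLeftCount_succ_of_no_corner hcorner, qyMaxLeftCount_zero]
      simp [hookFormula]
    | succ c ihc =>
      rw [harm, (addsCell_hook_leg (a + 1) c).qyMaxLeftCount_one_of_col_zero
        (zero_zero_mem_hook (a + 1) c), ihc,
        hookFormula_succ_succ]

section DoubleHook

variable {a b c d : ℕ}

lemma zero_zero_mem_doubleHook : (0, 0) ∈ doubleHook a b c d := by simp [mem_doubleHook]

lemma addsCell_doubleHook_arm (hba : b < a) :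
    AddsCell (doubleHook a b c d) (doubleHook (a + 1) b c d) 0 (a + 1) where
  notMem := by simp only [mem_doubleHook]; omega
  mem_iff i j := by simp only [mem_doubleHook]; omega

lemma addsCell_doubleHook_leg (hdc : d < c) :
    AddsCell (doubleHook a b c d) (doubleHook a b (c + 1) d) (c + 1) 0 where
  notMem := by simp only [mem_doubleHook]; omega
  mem_iff i j := by simp only [mem_doubleHook]; omega

lemma addsCell_doubleHook_second_arm (hba : b + 1 < a) :
    AddsCell (doubleHook a b c d) (doubleHook a (b + 1) c d) 1 (b + 2) where
  notMem := by simp only [mem_doubleHook]; omega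
  mem_iff i j := by simp only [mem_doubleHook]; omega

lemma addsCell_doubleHook_second_leg (hdc : d + 1 < c) :
    AddsCell (doubleHook a b c d) (doubleHook a b c (d + 1)) (d + 2) 1 where
  notMem := by simp only [mem_doubleHook]; omega
  mem_iff i j := by simp only [mem_doubleHook]; omega

lemma addsCell_hook_doubleHook (ha : 0 < a) (hc : 0 < c) :
    AddsCell (hook a c) (doubleHook a 0 c 0) 1 1 where
  notMem := by simp only [mem_hook]; omega
  mem_iff i j := by simp only [mem_doubleHook, mem_hook]; omega

lemma qyMaxCount_doubleHook_arm (hba : b < a) (M : ℤ) :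
    qyMaxCount (doubleHook (a + 1) b c d) M =
      qyMaxLeftCount (doubleHook (a + 1) b c d) M (b + 2) + qyMaxCount (doubleHook a b c d) M :=
  (addsCell_doubleHook_arm hba).qyMaxCount_of_row_zero zero_zero_mem_doubleHook (by omega)
    (by simp [mem_doubleHook]) M

lemma qyMaxCount_doubleHook_arm_succ_self (M : ℤ) :
    qyMaxCount (doubleHook (b + 1) b c d) M =
      qyMaxLeftCount (doubleHook (b + 1) b c d) M (b + 2) :=
  (qyMaxLeftCount_eq_qyMaxCount (by simp [mem_doubleHook])).symm

lemma qyMaxLeftCount_doubleHook_leg (hdc : d < c) (M : ℤ) :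
    qyMaxLeftCount (doubleHook a b (c + 1) d) M 1 = qyMaxCount (doubleHook a b c d) (M - 1) :=
  (addsCell_doubleHook_leg hdc).qyMaxLeftCount_one_of_col_zero zero_zero_mem_doubleHook M

lemma qyMaxLeftCount_doubleHook_leg_succ_self (M : ℤ) :
    qyMaxLeftCount (doubleHook a b (d + 1) d) M 1 = 0 := by
  rw [qyMaxLeftCount_succ_of_no_corner, qyMaxLeftCount_zero]
  simp only [mem_doubleHook]
  omega

lemma qyMaxLeftCount_doubleHook_second_arm (hba : b < a) (M : ℤ) :
    qyMaxLeftCount (doubleHook (a + 1) (b + 1) c d) M (b + 3) =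
      qyMaxLeftCount (doubleHook (a + 1) (b + 1) c d) M 2 +
        (qyMaxCount (doubleHook (a + 1) b c d) M + qyMaxCount (doubleHook a b c d) (M - 1) -
          qyMaxCount (doubleHook a b c d) M) := by
  rw [(addsCell_doubleHook_second_arm (by omega)).qyMaxLeftCount_succ_of_row_one
    (addsCell_doubleHook_arm hba) zero_zero_mem_doubleHook (by omega),
    qyMaxLeftCount_eq_of_no_corner (Nat.le_add_left 2 b)]
  simp only [mem_doubleHook]
  omega

lemma qyMaxLeftCount_doubleHook_second_leg (hdc : d < c) (M : ℤ) :
    qyMaxLeftCount (doubleHook a b (c + 1) (d + 1)) M 2 =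
      qyMaxLeftCount (doubleHook a b (c + 1) (d + 1)) M 1 +
        (qyMaxCount (doubleHook a b (c + 1) d) (M - 1) +
          qyMaxCount (doubleHook a b c d) (M - 1) - qyMaxCount (doubleHook a b c d) (M - 2)) :=
  (addsCell_doubleHook_second_leg (by omega)).qyMaxLeftCount_two_of_col_one
    (addsCell_doubleHook_leg hdc) zero_zero_mem_doubleHook M

lemma qyMaxLeftCount_doubleHook_second_leg_zero (hb : 0 < b) (M : ℤ) :
    qyMaxLeftCount (doubleHook a b c 0) M 2 = qyMaxLeftCount (doubleHook a b c 0) M 1 := by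
  refine qyMaxLeftCount_succ_of_no_corner ?_
  simp only [mem_doubleHook]
  omega

lemma qyMaxLeftCount_doubleHook_zero_zero (hc : 0 < c) (M : ℤ) :
    qyMaxLeftCount (doubleHook (a + 1) 0 c 0) M 2 =
      qyMaxLeftCount (doubleHook (a + 1) 0 c 0) M 1 +
        (hookFormula (a + 1) c M + hookFormula a c (M - 1) - hookFormula a c M) := by
  simp only [← qyMaxCount_hook]
  exact (addsCell_hook_doubleHook a.succ_pos hc).qyMaxLeftCount_succ_of_row_one
    (addsCell_hook_arm a c) (zero_zero_mem_hook a c) (by omega) M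

lemma qyMaxLeftCount_doubleHook_second_arm_eq_formula (hba : b ≤ a)
    (ih : ∀ a' b', a' ≤ a + 1 → b' < b → b' < a' → ∀ M,
      qyMaxCount (doubleHook a' b' c d) M = doubleHookFormula a' b' c d M) (M : ℤ) :
    qyMaxLeftCount (doubleHook (a + 1) b c d) M (b + 2) =
      qyMaxLeftCount (doubleHook (a + 1) b c d) M 2 +
        (doubleHookFormula (a + 1) (b - 1) c d M + doubleHookFormula a (b - 1) c d (M - 1) -
          doubleHookFormula a (b - 1) c d M) := by
  rcases b with _ | b
  · simp [doubleHookFormula_arm_neg_one]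
  · rw [qyMaxLeftCount_doubleHook_second_arm hba,
      ih (a + 1) b le_rfl b.lt_succ_self (by omega), ih a b a.le_succ b.lt_succ_self hba,
      ih a b a.le_succ b.lt_succ_self hba]
    push_cast
    rw [add_sub_cancel_right]

lemma qyMaxLeftCount_doubleHook_second_leg_eq_formula (hdc : d ≤ c) (hbd : 0 < b + d)
    (ih : ∀ c' d', c' ≤ c + 1 → d' < d → d' < c' → ∀ M,
      qyMaxCount (doubleHook a b c' d') M = doubleHookFormula a b c' d' M) (M : ℤ) :
    qyMaxLeftCount (doubleHook a b (c + 1) d) M 2 =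
      qyMaxLeftCount (doubleHook a b (c + 1) d) M 1 +
        (doubleHookFormula a b (c + 1) (d - 1) (M - 1) +
          doubleHookFormula a b c (d - 1) (M - 1) - doubleHookFormula a b c (d - 1) (M - 2)) := by
  rcases d with _ | d
  · rw [qyMaxLeftCount_doubleHook_second_leg_zero (b := b) hbd]
    simp [doubleHookFormula_leg_neg_one]
  · rw [qyMaxLeftCount_doubleHook_second_leg hdc,
      ih (c + 1) d le_rfl d.lt_succ_self (by omega), ih c d c.le_succ d.lt_succ_self hdc,
      ih c d c.le_succ d.lt_succ_self hdc]
    push_cast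
    rw [add_sub_cancel_right]

theorem qyMaxCount_doubleHook (hba : b < a) (hdc : d < c) (M : ℤ) :
    qyMaxCount (doubleHook a b c d) M = doubleHookFormula a b c d M := by
  induction hn : a + b + c + d using Nat.strong_induction_on generalizing a b c d M with
  | _ n ih =>
  subst hn
  obtain ⟨a, rfl⟩ : ∃ a', a = a' + 1 := ⟨a - 1, by omega⟩
  obtain ⟨c, rfl⟩ : ∃ c', c = c' + 1 := ⟨c - 1, by omega⟩
  have harm : qyMaxCount (doubleHook (a + 1) b (c + 1) d) M =
      qyMaxLeftCount (doubleHook (a + 1) b (c + 1) d) M (b + 2) +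
        doubleHookFormula a b (c + 1) d M := by
    obtain rfl | hba' : b = a ∨ b < a := by omega
    · rw [qyMaxCount_doubleHook_arm_succ_self, doubleHookFormula_arm_self, add_zero]
    · rw [qyMaxCount_doubleHook_arm hba', ih _ (by omega) hba' hdc _ rfl, Nat.cast_succ]
  have hleg : qyMaxLeftCount (doubleHook (a + 1) b (c + 1) d) M 1 =
      doubleHookFormula (a + 1) b c d (M - 1) := by
    obtain rfl | hdc' : d = c ∨ d < c := by omega
    · rw [qyMaxLeftCount_doubleHook_leg_succ_self, doubleHookFormula_leg_self]
    · rw [qyMaxLeftCount_doubleHook_leg hdc', ih _ (by omega) hba hdc' _ rfl, Nat.cast_succ]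
  rw [harm, qyMaxLeftCount_doubleHook_second_arm_eq_formula (by omega)
    fun a' b' _ _ hba' M ↦ ih _ (by omega) hba' hdc M rfl]
  push_cast
  rcases Nat.eq_zero_or_pos (b + d) with hbd | hbd
  · obtain ⟨rfl, rfl⟩ := Nat.add_eq_zero_iff.1 hbd
    rw [qyMaxLeftCount_doubleHook_zero_zero c.succ_pos, hleg]
    simp only [Nat.cast_zero, zero_sub, doubleHookFormula_arm_neg_one]
    rw [doubleHookFormula_zero_zero_rec]
    ring
  · have hrec := doubleHookFormula_rec (a := a + 1) (b := b) (c := c + 1) (d := d)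
      (by omega) (by omega) (by omega) (by omega) M
    simp only [add_sub_cancel_right] at hrec
    rw [qyMaxLeftCount_doubleHook_second_leg_eq_formula (by omega) hbd
      fun c' d' _ _ hdc' M ↦ ih _ (by omega) hba hdc' M rfl, hleg, hrec]
    push_cast
    ring

end DoubleHook

lemma HasRows2.eq_doubleHook {μ : YoungDiagram} {a b c d : ℕ}
    (hμ : HasRows2 μ (a + 1) (b + 2) (c + 1) (d + 2)) (hba : b < a) (hdc : d < c) :
    μ = doubleHook a b c d := by
  obtain ⟨hrow0, hrow1, htwo, hone, hzero⟩ := hμ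
  have hmem : ∀ i j : ℕ, (i, j) ∈ μ ↔ (i, j) ∈ doubleHook a b c d := fun i j ↦ by
    rw [YoungDiagram.mem_iff_lt_rowLen, mem_doubleHook]
    obtain rfl | rfl | ⟨hi, hid⟩ | ⟨hdi, hic⟩ | hci :
        i = 0 ∨ i = 1 ∨ (2 ≤ i ∧ i < d + 2) ∨ (d + 2 ≤ i ∧ i < c + 1) ∨ c + 1 ≤ i := by omega
    · rw [hrow0]; omega
    · rw [hrow1]; omega
    · rw [htwo i hi hid]; omega
    · rw [hone i hdi hic]; omega
    · rw [hzero i hci]; omega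
  ext ⟨i, j⟩
  exact hmem i j

lemma qytFormula_frobenius {a b c d p : ℕ} (hba : b < a) :
    qytFormula (a + 1) (b + 2) (c + 1) (d + 2) (p + d + 2) =
      (a - b) / (p + 1) * (a + c).choose p * (b + c).choose p * p.choose (p + d + 1 - c) *
        (b + d).choose d * (a + d).choose d / c.choose d := by
  have hsub : ((a + 1 - (b + 2) + 1 : ℕ) : ℚ) = a - b := by
    rw [← Nat.cast_sub hba.le]
    congr 1
    omega
  rw [qytFormula, hsub, show p + d + 2 - (d + 2) = p by omega,
    show a + 1 + (c + 1) - 2 = a + c by omega, show b + 2 + (c + 1) - 3 = b + c by omega,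
    show p + d + 2 - (c + 1) = p + d + 1 - c by omega, show b + 2 + (d + 2) - 4 = b + d by omega,
    show a + 1 + (d + 2) - 3 = a + d by omega, Nat.cast_succ]
  rfl

lemma qytFormula_eq_doubleHookFormula {a b c d m : ℕ} (hba : b < a) (hdc : d < c)
    (hm : c + 1 ≤ m) :
    qytFormula (a + 1) (b + 2) (c + 1) (d + 2) m = doubleHookFormula a b c d ((m : ℤ) - 1) := by
  obtain ⟨p, rfl⟩ : ∃ p, m = p + d + 2 := ⟨m - d - 2, by omega⟩
  have hp : intFactorial (p + 1) = (p + 1) * intFactorial p := by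
    rw [intFactorial_eq_mul (by omega), add_sub_cancel_right]
    push_cast
    rfl
  have hcd := inv_intFactorial_sub_one (c - d)
  have cancel (x : ℚ) : x = x * (intFactorial p * (intFactorial p)⁻¹ *
      (intFactorial d * (intFactorial d)⁻¹) *
      (intFactorial (c - d) * (intFactorial (c - d))⁻¹)) := by
    rw [mul_inv_cancel₀ (intFactorial_ne_zero (by omega)),
      mul_inv_cancel₀ (intFactorial_ne_zero (by omega)),
      mul_inv_cancel₀ (intFactorial_ne_zero (by omega)), mul_one, mul_one, mul_one]
  rw [qytFormula_frobenius hba, doubleHookFormula, doubleHookWeight]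
  simp only [natCast_choose_eq_intFactorial]
  rw [Nat.cast_sub (by omega : c ≤ p + d + 1)]
  push_cast
  rw [show (p : ℤ) - (p + d + 1 - c) = c - d - 1 by ring,
    show (p : ℤ) + d + 2 - 1 - d = p + 1 by ring,
    show (p : ℤ) + d + 2 - 1 - c = p + d + 1 - c by ring,
    show (a : ℤ) + c + d + 1 - (p + d + 2 - 1) = a + c - p by ring,
    show (b : ℤ) + c + d + 1 - (p + d + 2 - 1) = b + c - p by ring,
    add_sub_cancel_right, add_sub_cancel_right, hp, hcd]
  push_cast
  simp only [div_eq_mul_inv, mul_inv, inv_inv]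
  refine Eq.trans ?_ (cancel _).symm
  ring

theorem qyt_durfee_two_product_formula_general (l1 l2 h1 h2 m : ℕ)
    (hl2 : 2 ≤ l2) (hl : l2 ≤ l1) (hh2 : 2 ≤ h2) (hh : h2 ≤ h1)
    (μ : YoungDiagram) (hμ : HasRows2 μ l1 l2 h1 h2) (hm1 : h1 ≤ m) :
    (QYTeq μ m : ℚ) = qytFormula l1 l2 h1 h2 m := by
  obtain ⟨a, rfl⟩ : ∃ a, l1 = a + 1 := ⟨l1 - 1, by omega⟩
  obtain ⟨b, rfl⟩ : ∃ b, l2 = b + 2 := ⟨l2 - 2, by omega⟩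
  obtain ⟨c, rfl⟩ : ∃ c, h1 = c + 1 := ⟨h1 - 1, by omega⟩
  obtain ⟨d, rfl⟩ : ∃ d, h2 = d + 2 := ⟨h2 - 2, by omega⟩
  have hba : b < a := by omega
  have hdc : d < c := by omega
  rw [QYTeq_eq_qyMaxCount μ (by omega), hμ.eq_doubleHook hba hdc, qyMaxCount_doubleHook hba hdc,
    qytFormula_eq_doubleHookFormula hba hdc hm1]

/-- Main theorem: for a partition `λ = (λ₁, λ₂, 2^{h₂-2}, 1^{h₁-h₂})`
of size `n` with `λ₁, λ₂, h₁, h₂ ≥ 2` and `h₁ ≤ m ≤ n - (λ₁ - 1)`, the number of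
quasi-Yamanouchi tableaux of shape `λ` with maximum entry exactly `m` is given by the
product formula. -/
theorem qyt_durfee_two_product_formula (l1 l2 h1 h2 m : ℕ)
    (hl2 : 2 ≤ l2) (hl : l2 ≤ l1) (hh2 : 2 ≤ h2) (hh : h2 ≤ h1)
    (μ : YoungDiagram) (hμ : HasRows2 μ l1 l2 h1 h2)
    (hm1 : h1 ≤ m) (hm2 : m ≤ μ.card - (l1 - 1)) :
    (QYTeq μ m : ℚ) = qytFormula l1 l2 h1 h2 m :=
  qyt_durfee_two_product_formula_general l1 l2 h1 h2 m hl2 hl hh2 hh μ hμ hm1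
end

section
/- For λ₁ ≥ λ₂ ≥ 2, h₁ ≥ h₂ ≥ 2 and h₁ ≤ m ≤ h₁+h₂+λ₂−3, the identity C(m−h₂+1, h₁−h₂+1)·QYT_{=m}(λ) = C(λ₁+h₂−2, m−h₁)·C(λ₂+h₂−3, m−h₁)·SSYT_{h₁}(λ) holds, where λ = (λ₁, λ₂, 2^{h₂−2}, 1^{h₁−h₂}). -/
open YoungDiagram

/-!
Read the cells of a tableau by increasing entry, and from left to right among equal entries. With
`n = |λ|`, a semistandard tableau is determined by this order together with the gaps between its
entries and those of the unique quasi-Yamanouchi tableau read in the same order. Counting the gaps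
gives `SSYT_k(λ) = ∑ m, QYT_{=m}(λ) * C(n + k - m, n)`, a triangular system in which the numbers
`SSYT_k(λ)` determine the numbers `QYT_{=m}(λ)`.

Removing the largest entries from a tableau strips off a horizontal strip. The resulting recursion
is also satisfied by `det (C(r i, j))`, where `r` lists the row lengths of `λ`, shifted to be
strictly increasing. By `(j + 1) * C(r + 1, j + 1) = (r + 1) * C(r, j)`, the ratio
`SSYT_{k+1}(λ) / SSYT_k(λ)` is a product over the rows, which telescopes when
`λ = (λ₁, λ₂, 2^{h₂-2}, 1^{h₁-h₂})`. Hence `SSYT_k(λ)` is `SSYT_{h₁}(λ)` times a quotient of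
products of binomial coefficients, and Nanjundiah's identity says that the claimed values of
`QYT_{=m}(λ)` solve the triangular system.
-/

section BinomialSums

open Finset

theorem sum_antidiagonal_assoc {A M : Type*} [AddCommMonoid A] [HasAntidiagonal A]
    [AddCommMonoid M] (n : A) (f : A → A → A → M) :
    ∑ p ∈ antidiagonal n, ∑ q ∈ antidiagonal p.2, f p.1 q.1 q.2 =
      ∑ p ∈ antidiagonal n, ∑ q ∈ antidiagonal p.1, f q.1 q.2 p.2 := by
  rw [sum_sigma', sum_sigma']
  refine sum_nbij' (fun x ↦ ⟨(x.1.1 + x.2.1, x.2.2), (x.1.1, x.2.1)⟩)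
    (fun x ↦ ⟨(x.2.1, x.2.2 + x.1.2), (x.2.2, x.1.2)⟩) ?_ ?_ ?_ ?_ ?_ <;>
    simp only [mem_sigma, HasAntidiagonal.mem_antidiagonal, Sigma.forall, Prod.forall] <;> grind

theorem sum_antidiagonal_add_of_eq_zero {M : Type*} [AddCommMonoid M] (f : ℕ × ℕ → M) (a s : ℕ)
    (hf : ∀ p ∈ antidiagonal (a + s), p.1 < a → f p = 0) :
    ∑ p ∈ antidiagonal (a + s), f p = ∑ p ∈ antidiagonal s, f (a + p.1, p.2) := by
  rw [Nat.sum_antidiagonal_eq_sum_range_succ_mk, Nat.sum_antidiagonal_eq_sum_range_succ_mk,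
    Nat.succ_eq_add_one, add_assoc, sum_range_add, sum_eq_zero, zero_add]
  · exact sum_congr rfl fun i _ ↦ by rw [Nat.add_sub_add_left]
  · intro i hi
    have hi := mem_range.1 hi
    exact hf _ (mem_antidiagonal.2 (by dsimp only; omega)) hi

theorem sum_choose_add_mul_choose (a e s : ℕ) :
    ∑ p ∈ antidiagonal s, a.choose (e + p.1) * s.choose p.2 = (a + s).choose (e + s) := by
  rw [Nat.add_choose_eq, sum_antidiagonal_add_of_eq_zero]
  intro p hp hlt
  have := mem_antidiagonal.1 hp
  rw [Nat.choose_eq_zero_of_lt (n := s) (by omega), mul_zero]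

theorem choose_add_mul_choose_eq_sum (p q e t j : ℕ) :
    (q + e).choose (e + t) * (p + q + j).choose (p + q) =
      ∑ x ∈ antidiagonal j,
        (q + e).choose (e + (t + x.1)) * (e + (t + x.1)).choose x.1 * (p + (t + j)).choose x.2 := by
  obtain ht | ht := le_or_gt t q
  · rw [Nat.choose_symm_add (a := p + q), show p + q + j = (q - t) + (p + (t + j)) by omega,
      Nat.add_choose_eq (q - t), mul_sum]
    refine sum_congr rfl fun x _ ↦ ?_
    rw [← mul_assoc, ← add_assoc e t x.1, ← Nat.choose_symm_add (a := e + t),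
      Nat.choose_mul (Nat.le_add_right _ _), Nat.add_sub_cancel_left,
      show q + e - (e + t) = q - t by omega]
  · rw [Nat.choose_eq_zero_of_lt (by omega), zero_mul]
    refine (sum_eq_zero fun x _ ↦ ?_).symm
    rw [Nat.choose_eq_zero_of_lt (n := q + e) (by omega), zero_mul, zero_mul]

/-- Nanjundiah's identity, an integral form of the Pfaff–Saalschütz summation. -/
theorem sum_choose_mul_choose_mul_choose (q e r s : ℕ) :
    ∑ x ∈ antidiagonal s, (q + e).choose (e + x.1) * (q + r).choose x.1 *
        (q + e + r + q + x.2).choose (q + e + r + q) =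
      (q + e + r + s).choose s * (q + e + s).choose q := by
  set p := q + e + r
  calc ∑ x ∈ antidiagonal s, (q + e).choose (e + x.1) * (q + r).choose x.1 *
        (p + q + x.2).choose (p + q)
    _ = ∑ x ∈ antidiagonal s, ∑ y ∈ antidiagonal x.2, (q + r).choose x.1 *
          ((q + e).choose (e + (x.1 + y.1)) * (e + (x.1 + y.1)).choose y.1 *
            (p + s).choose y.2) := by
      refine sum_congr rfl fun x hx ↦ ?_
      rw [mul_right_comm, choose_add_mul_choose_eq_sum, mul_comm, mul_sum, mem_antidiagonal.1 hx]
    _ = ∑ x ∈ antidiagonal s, (q + e).choose (e + x.1) * (p + s).choose x.2 *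
          ∑ y ∈ antidiagonal x.1, (q + r).choose y.1 * (e + x.1).choose y.2 := by
      rw [sum_antidiagonal_assoc (f := fun t w v ↦ (q + r).choose t *
        ((q + e).choose (e + (t + w)) * (e + (t + w)).choose w * (p + s).choose v))]
      refine sum_congr rfl fun x _ ↦ ?_
      rw [mul_sum]
      refine sum_congr rfl fun y hy ↦ ?_
      rw [mem_antidiagonal.1 hy]
      ring
    _ = ∑ x ∈ antidiagonal s, (p + s).choose s * ((q + e).choose (e + x.1) * s.choose x.2) := by
      refine sum_congr rfl fun x hx ↦ ?_
      obtain rfl := mem_antidiagonal.1 hx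
      have htrinomial := Nat.choose_mul (n := p + (x.1 + x.2)) (Nat.le_add_left x.2 x.1)
      rw [show p + (x.1 + x.2) - x.2 = p + x.1 by omega, Nat.add_sub_cancel] at htrinomial
      rw [← Nat.add_choose_eq, show q + r + (e + x.1) = p + x.1 by omega, mul_assoc, ← htrinomial]
      ring
    _ = (p + s).choose s * (q + e + s).choose q := by
      rw [← mul_sum, sum_choose_add_mul_choose, add_assoc q e s, Nat.choose_symm_add]

theorem eq_of_sum_antidiagonal_mul_eq {R : Type*} [Ring R] [NoZeroDivisors R] {f g w : ℕ → R}
    (hw : w 0 ≠ 0)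
    (h : ∀ s, ∑ p ∈ antidiagonal s, f p.1 * w p.2 = ∑ p ∈ antidiagonal s, g p.1 * w p.2) :
    f = g := by
  have hw' : PowerSeries.mk w ≠ 0 := fun h0 ↦ hw (by simpa using congrArg (PowerSeries.coeff 0) h0)
  have hfg : PowerSeries.mk f * PowerSeries.mk w = PowerSeries.mk g * PowerSeries.mk w := by
    ext s
    simpa only [PowerSeries.coeff_mul, PowerSeries.coeff_mk] using h s
  funext s
  simpa using congrArg (PowerSeries.coeff s) (mul_right_cancel₀ hw' hfg)

theorem mul_choose_eq_of_succ_mul_eq {S : ℕ → ℕ} {p q e : ℕ}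
    (hS : ∀ s, S (s + 1) * ((s + e + 1) * (s + 1)) = S s * ((p + s + 1) * (q + e + s + 1)))
    (s : ℕ) :
    S s * (q + e).choose q = S 0 * ((p + s).choose s * (q + e + s).choose q) := by
  induction s with
  | zero => simp
  | succ s ih =>
    have hp : (p + (s + 1)).choose (s + 1) * (s + 1) = (p + s + 1) * (p + s).choose s :=
      (Nat.add_one_mul_choose_eq (p + s) s).symm
    have hq : (q + e + s + 1).choose q * (s + e + 1) = (q + e + s).choose q * (q + e + s + 1) := by
      rw [Nat.choose_mul_succ_eq, show q + e + s + 1 - q = s + e + 1 by omega]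
    refine Nat.eq_of_mul_eq_mul_right (show 0 < (s + e + 1) * (s + 1) by positivity) ?_
    calc S (s + 1) * (q + e).choose q * ((s + e + 1) * (s + 1))
      _ = S (s + 1) * ((s + e + 1) * (s + 1)) * (q + e).choose q := by ring
      _ = S s * (q + e).choose q * ((p + s + 1) * (q + e + s + 1)) := by rw [hS]; ring
      _ = S 0 * (((p + s + 1) * (p + s).choose s) *
            ((q + e + s).choose q * (q + e + s + 1))) := by rw [ih]; ring
      _ = S 0 * ((p + (s + 1)).choose (s + 1) * (q + e + (s + 1)).choose q) *
            ((s + e + 1) * (s + 1)) := by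
        rw [← hp, ← hq, ← add_assoc (q + e) s 1]
        ring

theorem choose_mul_eq_of_sum_antidiagonal_eq {Q S : ℕ → ℕ} {q e r : ℕ}
    (hQ : ∀ s, S s = ∑ x ∈ antidiagonal s,
      Q x.1 * (q + e + r + q + x.2).choose (q + e + r + q))
    (hS : ∀ s, S (s + 1) * ((s + e + 1) * (s + 1)) =
      S s * ((q + e + r + s + 1) * (q + e + s + 1)))
    (t : ℕ) :
    (e + t).choose e * Q t = (q + r).choose t * q.choose t * S 0 := by
  have key : (fun t ↦ ((q + e).choose q * Q t : ℤ)) =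
      fun t ↦ (S 0 * ((q + e).choose (e + t) * (q + r).choose t) : ℤ) := by
    refine eq_of_sum_antidiagonal_mul_eq
      (w := fun j ↦ ((q + e + r + q + j).choose (q + e + r + q) : ℤ)) (by simp) fun s ↦ ?_
    have h := mul_choose_eq_of_succ_mul_eq hS s
    rw [← sum_choose_mul_choose_mul_choose, hQ s, sum_mul, mul_sum] at h
    simp_rw [mul_assoc, ← mul_sum, ← mul_assoc]
    rw [← sum_mul, ← mul_sum] at h
    exact_mod_cast (mul_comm _ _).trans h
  have ht : (q + e).choose q * Q t = S 0 * ((q + e).choose (e + t) * (q + r).choose t) := by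
    exact_mod_cast congrFun key t
  have htrinomial : (q + e).choose (e + t) * (e + t).choose e = (q + e).choose q * q.choose t := by
    rw [Nat.choose_mul (Nat.le_add_right _ _), Nat.add_sub_cancel, Nat.add_sub_cancel_left,
      Nat.choose_symm_add]
  refine Nat.eq_of_mul_eq_mul_left (Nat.choose_pos (Nat.le_add_right q e)) ?_
  calc (q + e).choose q * ((e + t).choose e * Q t)
    _ = (e + t).choose e * ((q + e).choose q * Q t) := by ring
    _ = S 0 * (q + r).choose t * ((q + e).choose (e + t) * (e + t).choose e) := by rw [ht]; ring
    _ = (q + e).choose q * ((q + r).choose t * q.choose t * S 0) := by rw [htrinomial]; ring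

end BinomialSums

section AscentCount

open Finset

variable {α : Type*} [LinearOrder α] {N : ℕ}

/-- The number of ascents `c j < c (j + 1)` of the word `c` that end at or before position `i`. -/
def ascentCount (c : Fin (N + 1) → α) (i : Fin (N + 1)) : ℕ :=
  #{j : Fin N | j.castSucc < i ∧ c j.castSucc < c j.succ}

theorem ascentCount_zero (c : Fin (N + 1) → α) : ascentCount c 0 = 0 := by
  simp [ascentCount]

theorem ascentCount_succ (c : Fin (N + 1) → α) (i : Fin N) :
    ascentCount c i.succ =
      ascentCount c i.castSucc + if c i.castSucc < c i.succ then 1 else 0 := by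
  have hsplit : ∀ j : Fin N, j.castSucc < i.succ ∧ c j.castSucc < c j.succ ↔
      (j.castSucc < i.castSucc ∧ c j.castSucc < c j.succ) ∨
        (j = i ∧ c i.castSucc < c i.succ) := by
    intro j
    rw [Fin.castSucc_lt_succ_iff, Fin.castSucc_lt_castSucc_iff, le_iff_lt_or_eq, or_and_right]
    exact or_congr_right (and_congr_right fun h ↦ by rw [h])
  rw [ascentCount, filter_congr fun j _ ↦ hsplit j, filter_or, card_union_of_disjoint]
  · congr 1
    split_ifs with h
    · simp [h, filter_eq']
    · simp [h]
  · refine disjoint_filter.2 fun j _ hj hji ↦ ?_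
    exact absurd (hji.1 ▸ hj.1) (lt_irrefl _)

theorem ascentCount_le (c : Fin (N + 1) → α) (i : Fin (N + 1)) : ascentCount c i ≤ i := by
  induction i using Fin.induction with
  | zero => simp [ascentCount_zero]
  | succ i ih =>
    rw [ascentCount_succ, Fin.val_succ]
    exact Nat.add_le_add ih (by split_ifs <;> omega)

theorem strictMono_toLex_iff_strictMono_add_ascentCount {a : Fin (N + 1) → ℕ}
    {c : Fin (N + 1) → α} :
    StrictMono (fun i ↦ toLex (a i, c i)) ↔ StrictMono (fun i ↦ a i + ascentCount c i) := by
  simp only [Fin.strictMono_iff_lt_succ, Prod.Lex.toLex_lt_toLex, ascentCount_succ]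
  refine forall_congr' fun i ↦ ?_
  split_ifs with h <;> simp only [h, and_true, and_false, or_false] <;> omega

theorem val_le_of_strictMono {n : ℕ} {b : Fin n → ℕ} (hb : StrictMono b) (i : Fin n) :
    (i : ℕ) ≤ b i := by
  obtain ⟨i, hi⟩ := i
  induction i with
  | zero => exact Nat.zero_le _
  | succ i ih => exact (ih (by omega)).trans_lt (hb (Fin.mk_lt_mk.2 i.lt_succ_self))

theorem card_strictMono_lt (n M : ℕ) :
    Nat.card {b : Fin n → ℕ // StrictMono b ∧ ∀ i, b i < M} = M.choose n := by
  have e : {b : Fin n → ℕ // StrictMono b ∧ ∀ i, b i < M} ≃ powersetCard n (range M) := by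
    refine Equiv.ofBijective (fun b ↦ ⟨univ.image b.1, mem_powersetCard.2 ⟨?_, ?_⟩⟩) ⟨?_, ?_⟩
    · simpa [image_subset_iff] using b.2.2
    · rw [card_image_of_injective _ b.2.1.injective, card_fin]
    · rintro ⟨b, hb, _⟩ ⟨b', hb', _⟩ h
      have hrange := congrArg (fun s : Finset ℕ ↦ (s : Set ℕ)) (congrArg Subtype.val h)
      simp only [coe_image, coe_univ, Set.image_univ] at hrange
      exact Subtype.ext ((hb.range_inj hb').1 hrange)
    · rintro ⟨s, hs⟩
      obtain ⟨hsub, hcard⟩ := mem_powersetCard.1 hs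
      exact ⟨⟨s.orderEmbOfFin hcard, (s.orderEmbOfFin hcard).strictMono,
        fun i ↦ mem_range.1 (hsub (s.orderEmbOfFin_mem hcard i))⟩, Subtype.ext (by simp)⟩
  rw [Nat.card_congr e, Nat.card_eq_fintype_card, Fintype.card_coe, card_powersetCard, card_range]

theorem monotone_of_strictMono_toLex {ι β γ : Type*} [PartialOrder ι] [Preorder β] [Preorder γ]
    {a : ι → β} {c : ι → γ} (h : StrictMono fun i ↦ toLex (a i, c i)) : Monotone a :=
  fun _ _ hij ↦ Prod.Lex.monotone_fst _ _ (h.monotone hij)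

theorem card_strictMono_toLex_lt (c : Fin (N + 1) → α) (k : ℕ) :
    Nat.card {a : Fin (N + 1) → ℕ // StrictMono (fun i ↦ toLex (a i, c i)) ∧ ∀ i, a i < k} =
      (k + ascentCount c (Fin.last N)).choose (N + 1) := by
  have lt_iff : ∀ {f : Fin (N + 1) → ℕ} {l : ℕ}, Monotone f →
      ((∀ i, f i < l) ↔ f (Fin.last N) < l) := fun hf ↦
    ⟨fun h ↦ h _, fun h i ↦ (hf (Fin.le_last i)).trans_lt h⟩
  have mem_iff : ∀ a : Fin (N + 1) → ℕ,
      (StrictMono (fun i ↦ toLex (a i, c i)) ∧ ∀ i, a i < k) ↔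
        StrictMono (fun i ↦ a i + ascentCount c i) ∧
          ∀ i, a i + ascentCount c i < k + ascentCount c (Fin.last N) := by
    intro a
    rw [← strictMono_toLex_iff_strictMono_add_ascentCount]
    refine and_congr_right fun ha ↦ ?_
    rw [lt_iff (monotone_of_strictMono_toLex ha),
      lt_iff (strictMono_toLex_iff_strictMono_add_ascentCount.1 ha).monotone,
      Nat.add_lt_add_iff_right]
  rw [← card_strictMono_lt]
  refine Nat.card_congr (Equiv.ofBijective
    (fun a ↦ ⟨fun i ↦ a.1 i + ascentCount c i, (mem_iff a.1).1 a.2⟩) ⟨fun a a' h ↦ ?_, fun b ↦ ?_⟩)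
  · exact Subtype.ext (funext fun i ↦
      Nat.add_right_cancel (congrFun (congrArg Subtype.val h) i))
  · have hb : ∀ i, b.1 i - ascentCount c i + ascentCount c i = b.1 i := fun i ↦
      Nat.sub_add_cancel ((ascentCount_le c i).trans (val_le_of_strictMono b.2.1 i))
    exact ⟨⟨fun i ↦ b.1 i - ascentCount c i, (mem_iff _).2 (by simpa only [hb] using b.2)⟩,
      Subtype.ext (funext hb)⟩

theorem card_add_ascentCount_eq (c : Fin (N + 1) → α) (m : ℕ) :
    Nat.card {a : Fin (N + 1) → ℕ // StrictMono (fun i ↦ toLex (a i, c i)) ∧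
        (∀ i, a i + ascentCount c i = i) ∧ a (Fin.last N) + 1 = m} =
      if m = N + 1 - ascentCount c (Fin.last N) then 1 else 0 := by
  have hle := ascentCount_le c
  have hlast := hle (Fin.last N)
  rw [Fin.val_last] at hlast
  split_ifs with hm
  · refine Nat.card_eq_one_iff_unique.2
      ⟨⟨fun a a' ↦ Subtype.ext (funext fun i ↦ ?_)⟩, ⟨fun i ↦ i - ascentCount c i, ?_, ?_, ?_⟩⟩
    · exact Nat.add_right_cancel ((a.2.2.1 i).trans (a'.2.2.1 i).symm)
    · rw [strictMono_toLex_iff_strictMono_add_ascentCount]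
      simpa only [Nat.sub_add_cancel (hle _)] using Fin.val_strictMono
    · exact fun i ↦ Nat.sub_add_cancel (hle i)
    · dsimp only
      rw [Fin.val_last]
      omega
  · refine Nat.card_eq_zero.2 (Or.inl ⟨fun a ↦ hm ?_⟩)
    have h := a.2.2.1 (Fin.last N)
    rw [Fin.val_last] at h
    have := a.2.2.2
    omega

/-- The condition `IsQY` for the entries `a` and the columns `c` of the cells of a tableau, listed
in any order. -/
def IsQYWord {ι : Type*} (a : ι → ℕ) (c : ι → α) : Prop :=
  ∀ x, 0 < a x → ∃ y z, a y = a x ∧ a z + 1 = a x ∧ c y ≤ c z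

theorem IsQYWord.add_ascentCount_eq {a : Fin (N + 1) → ℕ} {c : Fin (N + 1) → α}
    (hqy : IsQYWord a c) (h : StrictMono fun i ↦ toLex (a i, c i)) (i : Fin (N + 1)) :
    a i + ascentCount c i = i := by
  have ha := monotone_of_strictMono_toLex h
  have hc : ∀ {i j}, i ≤ j → a i = a j → c i ≤ c j := fun hij hane ↦
    ((Prod.Lex.toLex_le_toLex.1 (h.monotone hij)).resolve_left hane.not_lt).2
  induction i using Fin.induction with
  | zero =>
    by_contra hne
    obtain ⟨-, z, -, hz, -⟩ := hqy 0 (by simpa [ascentCount_zero, pos_iff_ne_zero] using hne)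
    have := ha (Fin.zero_le z)
    omega
  | succ i ih =>
    have hlt := strictMono_toLex_iff_strictMono_add_ascentCount.1 h (Fin.castSucc_lt_succ (i := i))
    rw [Fin.val_castSucc] at ih
    rw [Fin.val_succ]
    by_contra hne
    simp only [ascentCount_succ] at hlt hne
    obtain ⟨y, z, hy, hz, hyz⟩ := hqy i.succ (by split_ifs at hlt hne <;> omega)
    have hzi : z ≤ i.castSucc :=
      Fin.le_castSucc_iff.2 (lt_of_not_ge fun hge ↦ by have := ha hge; omega)
    have haz := ha hzi
    split_ifs at hlt hne with hasc
    · have hiy : i.succ ≤ y := Fin.castSucc_lt_iff_succ_le.1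
        (lt_of_not_ge fun hge ↦ by have := ha hge; omega)
      exact hasc.not_ge ((hc hiy hy.symm).trans (hyz.trans (hc hzi (by omega))))
    · omega

theorem isQYWord_of_add_ascentCount_eq {a : Fin (N + 1) → ℕ} {c : Fin (N + 1) → α}
    (h : ∀ i, a i + ascentCount c i = i) : IsQYWord a c := by
  intro x hx
  induction x using Fin.induction with
  | zero =>
    have := h 0
    rw [Fin.val_zero] at this
    omega
  | succ i ih =>
    obtain heq | hne := eq_or_ne (a i.castSucc) (a i.succ)
    · exact heq ▸ ih (heq ▸ hx)
    · have hi := h i.castSucc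
      have hsucc := h i.succ
      rw [Fin.val_castSucc] at hi
      rw [ascentCount_succ, Fin.val_succ] at hsucc
      split_ifs at hsucc with hasc
      · omega
      · exact ⟨i.succ, i.castSucc, rfl, by omega, not_lt.1 hasc⟩

end AscentCount

theorem existsUnique_equiv_strictMono_comp {α β : Type*} [Fintype α] [LinearOrder β] {n : ℕ}
    (hn : Fintype.card α = n) {f : α → β} (hf : f.Injective) :
    ∃! e : Fin n ≃ α, StrictMono (f ∘ e) := by
  let := LinearOrder.lift' f hf
  have he : StrictMono (f ∘ monoEquivOfFin α hn) := (monoEquivOfFin α hn).strictMono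
  refine ⟨(monoEquivOfFin α hn).toEquiv, he, fun e' he' ↦ Equiv.ext fun i ↦ hf ?_⟩
  refine congrFun ((he'.range_inj he).1 ?_) i
  rw [e'.surjective.range_comp, (monoEquivOfFin α hn).surjective.range_comp]

section ReadingOrder

variable {μ : YoungDiagram} {n : ℕ}

/-- The entries of `T`, listed along an enumeration `e` of its cells. -/
def entrySeq (T : SemistandardYoungTableau μ) (e : Fin n ≃ μ.cells) (i : Fin n) : ℕ :=
  T (e i).1.1 (e i).1.2

/-- The columns of the cells of `μ`, listed along an enumeration `e`. -/
def colSeq (e : Fin n ≃ μ.cells) (i : Fin n) : ℕ :=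
  (e i).1.2

/-- `e` enumerates the cells by increasing entry of `T`, and from left to right among equal
entries, which is the order in which standardization relabels them. -/
def IsReadingOrder (T : SemistandardYoungTableau μ) (e : Fin n ≃ μ.cells) : Prop :=
  StrictMono fun i ↦ toLex (entrySeq T e i, colSeq e i)

/-- `e` is a linear extension of the product order on the cells of `μ`, that is, a standard
filling. -/
def IsLinearExtension (e : Fin n ≃ μ.cells) : Prop :=
  ∀ i j, (e i).1 ≤ (e j).1 → i ≤ j

theorem IsReadingOrder.isLinearExtension {T : SemistandardYoungTableau μ} {e : Fin n ≃ μ.cells}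
    (h : IsReadingOrder T e) : IsLinearExtension e := by
  intro i j hij
  have hj : ((e j).1.1, (e j).1.2) ∈ μ := (e j).2
  have hle : entrySeq T e i ≤ entrySeq T e j :=
    (T.row_weak_of_le hij.2 (μ.up_left_mem hij.1 le_rfl hj)).trans (T.col_weak hij.1 hj)
  refine h.le_iff_le.1 (Prod.Lex.toLex_le_toLex.2 ?_)
  exact hle.lt_or_eq.imp_right fun heq ↦ ⟨heq, hij.2⟩

theorem injective_toLex_entry_col (T : SemistandardYoungTableau μ) :
    Function.Injective fun p : μ.cells ↦ toLex (T p.1.1 p.1.2, p.1.2) := by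
  rintro ⟨⟨i, j⟩, hij⟩ ⟨⟨i', j'⟩, hij'⟩ heq
  obtain ⟨hT, rfl⟩ : T i j = T i' j' ∧ j = j' := by simpa using heq
  obtain hlt | rfl | hlt := lt_trichotomy i i'
  · exact absurd hT (T.col_strict hlt hij').ne
  · rfl
  · exact absurd hT (T.col_strict hlt hij).ne'

theorem existsUnique_isReadingOrder (hn : μ.card = n) (T : SemistandardYoungTableau μ) :
    ∃! e : Fin n ≃ μ.cells, IsReadingOrder T e :=
  existsUnique_equiv_strictMono_comp (by simpa using hn) (injective_toLex_entry_col T)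

/-- The tableau whose entries along the linear extension `e` form the sequence `a`. -/
def tableauOfSeq {e : Fin n ≃ μ.cells} (he : IsLinearExtension e) {a : Fin n → ℕ}
    (ha : StrictMono fun i ↦ toLex (a i, colSeq e i)) : SemistandardYoungTableau μ where
  entry i j := if h : (i, j) ∈ μ.cells then a (e.symm ⟨(i, j), h⟩) else 0
  row_weak' := by
    intro i j₁ j₂ hj h
    have h₁ : (i, j₁) ∈ μ := μ.up_left_mem le_rfl hj.le h
    rw [dif_pos ((μ.mem_cells _).2 h), dif_pos ((μ.mem_cells _).2 h₁)]
    exact monotone_of_strictMono_toLex ha (he _ _ (by simpa using hj.le))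
  col_strict' := by
    intro i₁ i₂ j hi h
    have h₁ : (i₁, j) ∈ μ := μ.up_left_mem hi.le le_rfl h
    rw [dif_pos ((μ.mem_cells _).2 h), dif_pos ((μ.mem_cells _).2 h₁)]
    have hlt : e.symm ⟨(i₁, j), h₁⟩ < e.symm ⟨(i₂, j), h⟩ :=
      (he _ _ (by simpa using hi.le)).lt_of_ne (by simpa using hi.ne)
    simpa [Prod.Lex.toLex_lt_toLex, colSeq] using ha hlt
  zeros' := fun h ↦ dif_neg h

theorem entrySeq_tableauOfSeq {e : Fin n ≃ μ.cells} (he : IsLinearExtension e) {a : Fin n → ℕ}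
    (ha : StrictMono fun i ↦ toLex (a i, colSeq e i)) : entrySeq (tableauOfSeq he ha) e = a := by
  funext i
  exact (dif_pos (e i).2).trans (by simp)

theorem forall_mem_iff_forall_equiv (e : Fin n ≃ μ.cells) {P : ℕ → ℕ → Prop} :
    (∀ i j, (i, j) ∈ μ → P i j) ↔ ∀ x, P (e x).1.1 (e x).1.2 := by
  refine ⟨fun h x ↦ h _ _ (e x).2, fun h i j hij ↦ ?_⟩
  simpa using h (e.symm ⟨(i, j), hij⟩)

theorem exists_mem_iff_exists_equiv (e : Fin n ≃ μ.cells) {P : ℕ → ℕ → Prop} :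
    (∃ i j, (i, j) ∈ μ ∧ P i j) ↔ ∃ x, P (e x).1.1 (e x).1.2 := by
  simpa using (forall_mem_iff_forall_equiv e (P := fun i j ↦ ¬ P i j)).not

theorem ext_of_entrySeq_eq {T T' : SemistandardYoungTableau μ} (e : Fin n ≃ μ.cells)
    (h : entrySeq T e = entrySeq T' e) : T = T' := by
  ext i j
  by_cases hij : (i, j) ∈ μ
  · exact (forall_mem_iff_forall_equiv e (P := fun i j ↦ T i j = T' i j)).2 (congrFun h) i j hij
  · rw [T.zeros hij, T'.zeros hij]

/-- The tableaux read in the order `e` are the sequences along `e` that increase strictly when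
ties are broken by columns. -/
def readingOrderEquiv {e : Fin n ≃ μ.cells} (he : IsLinearExtension e) :
    {T : SemistandardYoungTableau μ // IsReadingOrder T e} ≃
      {a : Fin n → ℕ // StrictMono fun i ↦ toLex (a i, colSeq e i)} where
  toFun T := ⟨entrySeq T.1 e, T.2⟩
  invFun a := ⟨tableauOfSeq he a.2, by rw [IsReadingOrder, entrySeq_tableauOfSeq]; exact a.2⟩
  left_inv T := Subtype.ext (ext_of_entrySeq_eq e (entrySeq_tableauOfSeq he T.2))
  right_inv a := Subtype.ext (entrySeq_tableauOfSeq he a.2)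

open Classical in
theorem card_eq_sum_isLinearExtension (hn : μ.card = n) {P : SemistandardYoungTableau μ → Prop}
    [Finite {T // P T}] {R : (Fin n ≃ μ.cells) → (Fin n → ℕ) → Prop}
    (hPR : ∀ T e, IsReadingOrder T e → (P T ↔ R e (entrySeq T e))) :
    Nat.card {T // P T} = ∑ e : {e : Fin n ≃ μ.cells // IsLinearExtension e},
      Nat.card {a : Fin n → ℕ // StrictMono (fun i ↦ toLex (a i, colSeq e.1 i)) ∧ R e.1 a} := by
  choose E hE hE_unique using existsUnique_isReadingOrder (n := n) hn
  let f (T : {T // P T}) : {e : Fin n ≃ μ.cells // IsLinearExtension e} :=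
    ⟨E T.1, (hE T.1).isLinearExtension⟩
  rw [Nat.card_congr (Equiv.sigmaFiberEquiv f).symm, Nat.card_sigma]
  refine Finset.sum_congr rfl fun e _ ↦ Nat.card_congr ?_
  have mem_fiber_iff (T : SemistandardYoungTableau μ) : E T = e.1 ↔ IsReadingOrder T e.1 :=
    ⟨fun h ↦ h ▸ hE T, fun h ↦ (hE_unique T _ h).symm⟩
  calc {T : {T // P T} // f T = e}
    _ ≃ {T : {T // P T} // IsReadingOrder T.1 e.1} :=
      Equiv.subtypeEquivRight fun T ↦ Subtype.ext_iff.trans (mem_fiber_iff T.1)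
    _ ≃ {T // P T ∧ IsReadingOrder T e.1} :=
      Equiv.subtypeSubtypeEquivSubtypeInter P (IsReadingOrder · e.1)
    _ ≃ {T // IsReadingOrder T e.1 ∧ P T} := Equiv.subtypeEquivRight fun _ ↦ and_comm
    _ ≃ {T : {T // IsReadingOrder T e.1} // P T.1} :=
      (Equiv.subtypeSubtypeEquivSubtypeInter (IsReadingOrder · e.1) P).symm
    _ ≃ {a : {a // StrictMono fun i ↦ toLex (a i, colSeq e.1 i)} // R e.1 a.1} :=
      (readingOrderEquiv e.2).subtypeEquiv fun T ↦ hPR T.1 e.1 T.2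
    _ ≃ {a // StrictMono (fun i ↦ toLex (a i, colSeq e.1 i)) ∧ R e.1 a} :=
      Equiv.subtypeSubtypeEquivSubtypeInter _ (R e.1)

end ReadingOrder

section Standardization

open Finset

variable {μ : YoungDiagram} {N : ℕ}

instance finite_entryLE (μ : YoungDiagram) (k : ℕ) :
    Finite {T : SemistandardYoungTableau μ // EntryLE μ T k} := by
  refine Finite.of_injective (β := μ.cells → Fin k)
    (fun T p ↦ ⟨T.1 p.1.1 p.1.2, T.2 _ _ p.2⟩) fun T T' h ↦ Subtype.ext ?_
  refine ext_of_entrySeq_eq μ.cells.equivFin.symm (funext fun i ↦ ?_)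
  exact congrArg Fin.val (congrFun h _)

instance finite_isQY_maxEq (μ : YoungDiagram) (m : ℕ) :
    Finite {T : SemistandardYoungTableau μ // IsQY μ T ∧ MaxEq μ T m} :=
  Finite.of_injective _ (Subtype.impEmbedding _ (EntryLE μ · m) fun _ h ↦ h.2.1).injective

theorem entryLE_iff_forall_entrySeq_lt {n : ℕ} (T : SemistandardYoungTableau μ)
    (e : Fin n ≃ μ.cells) (k : ℕ) : EntryLE μ T k ↔ ∀ i, entrySeq T e i < k :=
  forall_mem_iff_forall_equiv e

theorem IsReadingOrder.maxEq_iff {T : SemistandardYoungTableau μ} {e : Fin (N + 1) ≃ μ.cells}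
    (h : IsReadingOrder T e) (m : ℕ) : MaxEq μ T m ↔ entrySeq T e (Fin.last N) + 1 = m := by
  have hle : ∀ i, entrySeq T e i ≤ entrySeq T e (Fin.last N) := fun i ↦
    monotone_of_strictMono_toLex h (Fin.le_last i)
  rw [MaxEq, entryLE_iff_forall_entrySeq_lt T e, exists_mem_iff_exists_equiv e]
  change (∀ i, entrySeq T e i < m) ∧ (∃ i, entrySeq T e i = m - 1) ↔ _
  constructor
  · rintro ⟨hlt, i, hi⟩
    have := hlt (Fin.last N)
    have := hle i
    omega
  · rintro rfl
    exact ⟨fun i ↦ Nat.lt_succ_of_le (hle i), Fin.last N, rfl⟩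

theorem isQY_iff_isQYWord {n : ℕ} (T : SemistandardYoungTableau μ) (e : Fin n ≃ μ.cells) :
    IsQY μ T ↔ IsQYWord (entrySeq T e) (colSeq e) := by
  have hmem : ∀ x, ((e x).1.1, (e x).1.2) ∈ μ := fun x ↦ (e x).2
  constructor
  · intro h x hx
    obtain ⟨i, j, i', j', hij, hij', hT, hT', hj⟩ := h _ hx ⟨_, _, hmem x, rfl⟩
    refine ⟨e.symm ⟨(i, j), hij⟩, e.symm ⟨(i', j'), hij'⟩, ?_⟩
    simp only [entrySeq, colSeq, Equiv.apply_symm_apply] at hT hT' hx ⊢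
    exact ⟨hT, by omega, hj⟩
  · rintro h v hv ⟨i, j, hij, rfl⟩
    have hx : entrySeq T e (e.symm ⟨(i, j), hij⟩) = T i j := by simp [entrySeq]
    obtain ⟨y, z, hy, hz, hyz⟩ := h _ (hv.trans_eq hx.symm)
    rw [hx] at hy hz
    exact ⟨_, _, _, _, hmem y, hmem z, hy, Nat.eq_sub_of_add_eq hz, hyz⟩

theorem IsReadingOrder.isQY_iff {T : SemistandardYoungTableau μ} {e : Fin (N + 1) ≃ μ.cells}
    (h : IsReadingOrder T e) :
    IsQY μ T ↔ ∀ i, entrySeq T e i + ascentCount (colSeq e) i = i := by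
  rw [isQY_iff_isQYWord T e]
  exact ⟨fun hqy ↦ hqy.add_ascentCount_eq h, isQYWord_of_add_ascentCount_eq⟩

theorem sum_antidiagonal_ite_mul_choose {N A : ℕ} (hA : A ≤ N) (k : ℕ) :
    ∑ p ∈ antidiagonal k,
        (if p.1 = N + 1 - A then 1 else 0) * (N + 1 + p.2).choose (N + 1) =
      (k + A).choose (N + 1) := by
  simp only [ite_mul, one_mul, zero_mul]
  rw [← sum_filter, HasAntidiagonal.filter_fst_eq_antidiagonal k (N + 1 - A)]
  split_ifs with h
  · rw [sum_singleton, show N + 1 + (k - (N + 1 - A)) = k + A by omega]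
  · rw [sum_empty, Nat.choose_eq_zero_of_lt (by omega)]

/-- Destandardization: a tableau with entries below `k` is determined by its reading order and by
the gaps left between its entries and those of the quasi-Yamanouchi tableau with that order. -/
theorem ssytle_eq_sum_qyteq_mul_choose (hμ : μ.card = N + 1) (k : ℕ) :
    SSYTle μ k = ∑ p ∈ antidiagonal k, QYTeq μ p.1 * (N + 1 + p.2).choose (N + 1) := by
  classical
  have hQ (m : ℕ) : QYTeq μ m = ∑ e : {e : Fin (N + 1) ≃ μ.cells // IsLinearExtension e},
      if m = N + 1 - ascentCount (colSeq e.1) (Fin.last N) then 1 else 0 := by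
    rw [QYTeq, card_eq_sum_isLinearExtension hμ (R := fun e a ↦
      (∀ i, a i + ascentCount (colSeq e) i = i) ∧ a (Fin.last N) + 1 = m)
      fun T e h ↦ and_congr h.isQY_iff (h.maxEq_iff m)]
    exact sum_congr rfl fun e _ ↦ card_add_ascentCount_eq (colSeq e.1) m
  rw [SSYTle, card_eq_sum_isLinearExtension hμ (R := fun _ a ↦ ∀ i, a i < k)
    fun T e _ ↦ entryLE_iff_forall_entrySeq_lt T e k]
  simp only [hQ, sum_mul]
  rw [sum_comm]
  refine sum_congr rfl fun e _ ↦ ?_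
  rw [card_strictMono_toLex_lt]
  exact (sum_antidiagonal_ite_mul_choose (ascentCount_le _ (Fin.last N)) k).symm

end Standardization

section BranchingRule

variable {μ ν : YoungDiagram} {k : ℕ}

theorem le_entry (T : SemistandardYoungTableau μ) {i j : ℕ} (hij : (i, j) ∈ μ) : i ≤ T i j := by
  induction i with
  | zero => exact Nat.zero_le _
  | succ i ih =>
    exact (ih (μ.up_left_mem i.le_succ le_rfl hij)).trans_lt (T.col_strict i.lt_succ_self hij)

theorem isEmpty_entryLE (h : (k, 0) ∈ μ) :
    IsEmpty {T : SemistandardYoungTableau μ // EntryLE μ T k} :=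
  ⟨fun T ↦ (le_entry T.1 h).not_gt (T.2 _ _ h)⟩

theorem ssytle_eq_zero (h : (k, 0) ∈ μ) : SSYTle μ k = 0 :=
  have := isEmpty_entryLE h
  Nat.card_of_isEmpty

theorem qyteq_eq_zero (h : (k, 0) ∈ μ) : QYTeq μ k = 0 :=
  have := isEmpty_entryLE h
  have : IsEmpty {T : SemistandardYoungTableau μ // IsQY μ T ∧ MaxEq μ T k} :=
    (Subtype.impEmbedding _ (EntryLE μ · k) fun _ h ↦ h.2.1).toFun.isEmpty
  Nat.card_of_isEmpty

/-- The cells of `μ` that satisfy `p`, when these are closed under going up and to the left. -/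
def subdiagram (μ : YoungDiagram) (p : ℕ → ℕ → Prop) [∀ i j, Decidable (p i j)]
    (hp : ∀ {i j i' j'}, i' ≤ i → j' ≤ j → (i, j) ∈ μ → p i j → p i' j') : YoungDiagram where
  cells := {c ∈ μ.cells | p c.1 c.2}
  isLowerSet := by
    intro c c' hle hc
    simp only [Finset.coe_filter, Set.mem_ofPred_eq, mem_cells] at hc ⊢
    exact ⟨μ.up_left_mem hle.1 hle.2 hc.1, hp hle.1 hle.2 hc.1 hc.2⟩

theorem mem_subdiagram {p : ℕ → ℕ → Prop} [∀ i j, Decidable (p i j)]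
    {hp : ∀ {i j i' j'}, i' ≤ i → j' ≤ j → (i, j) ∈ μ → p i j → p i' j'} {i j : ℕ} :
    (i, j) ∈ subdiagram μ p hp ↔ (i, j) ∈ μ ∧ p i j :=
  Finset.mem_filter

/-- The shape of the part of `T` with entries less than `k`. -/
def shapeLT (T : SemistandardYoungTableau μ) (k : ℕ) : YoungDiagram :=
  subdiagram μ (fun i j ↦ T i j < k) fun hi hj hij hlt ↦
    ((T.row_weak_of_le hj (μ.up_left_mem hi le_rfl hij)).trans (T.col_weak hi hij)).trans_lt hlt

theorem mem_shapeLT {T : SemistandardYoungTableau μ} {i j : ℕ} :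
    (i, j) ∈ shapeLT T k ↔ (i, j) ∈ μ ∧ T i j < k :=
  Finset.mem_filter

/-- The skew shape `μ / ν` is a horizontal strip: it has at most one cell in each column. -/
def IsHorizontalStrip (ν μ : YoungDiagram) : Prop :=
  ν ≤ μ ∧ ∀ i j, (i + 1, j) ∈ μ → (i, j) ∈ ν

theorem isHorizontalStrip_shapeLT {T : SemistandardYoungTableau μ} (hT : EntryLE μ T (k + 1)) :
    IsHorizontalStrip (shapeLT T k) μ :=
  ⟨fun _ hc ↦ (mem_shapeLT.1 hc).1, fun i _ hij ↦ mem_shapeLT.2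
    ⟨μ.up_left_mem i.le_succ le_rfl hij,
      (T.col_strict i.lt_succ_self hij).trans_le (Nat.le_of_lt_succ (hT _ _ hij))⟩⟩

theorem finite_setOf_isHorizontalStrip (μ : YoungDiagram) :
    {ν | IsHorizontalStrip ν μ}.Finite :=
  Set.Finite.of_injOn (f := cells) (t := μ.cells.powerset)
    (fun _ hν ↦ Finset.mem_powerset.2 (cells_subset_iff.2 hν.1))
    (fun _ _ _ _ h ↦ YoungDiagram.ext h) (Finset.finite_toSet _)

/-- The diagrams `ν` such that `μ / ν` is a horizontal strip. -/
noncomputable def horizontalStrips (μ : YoungDiagram) : Finset YoungDiagram :=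
  (finite_setOf_isHorizontalStrip μ).toFinset

theorem mem_horizontalStrips : ν ∈ horizontalStrips μ ↔ IsHorizontalStrip ν μ := by
  simp [horizontalStrips]

/-- The restriction of `T` to a smaller diagram. -/
def restrictTableau (hν : ν ≤ μ) (T : SemistandardYoungTableau μ) : SemistandardYoungTableau ν where
  entry i j := if (i, j) ∈ ν then T i j else 0
  row_weak' := by
    intro i j₁ j₂ hj h
    rw [if_pos h, if_pos (ν.up_left_mem le_rfl hj.le h)]
    exact T.row_weak hj (hν h)
  col_strict' := by
    intro i₁ i₂ j hi h
    rw [if_pos h, if_pos (ν.up_left_mem hi.le le_rfl h)]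
    exact T.col_strict hi (hν h)
  zeros' h := if_neg h

/-- The extension of `T` by the entry `k` on the horizontal strip `μ / ν`. -/
def extendTableau (hν : IsHorizontalStrip ν μ) (T : SemistandardYoungTableau ν)
    (hT : EntryLE ν T k) : SemistandardYoungTableau μ where
  entry i j := if (i, j) ∈ ν then T i j else if (i, j) ∈ μ then k else 0
  row_weak' := by
    intro i j₁ j₂ hj h
    by_cases h₂ : (i, j₂) ∈ ν
    · rw [if_pos h₂, if_pos (ν.up_left_mem le_rfl hj.le h₂)]
      exact T.row_weak hj h₂
    · rw [if_neg h₂, if_pos h, if_pos (μ.up_left_mem le_rfl hj.le h)]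
      split_ifs with h₁
      exacts [(hT _ _ h₁).le, le_rfl]
  col_strict' := by
    intro i₁ i₂ j hi h
    have h₁ : (i₁, j) ∈ ν := hν.2 _ _ (μ.up_left_mem hi le_rfl h)
    rw [if_pos h₁, if_pos h]
    split_ifs with h₂
    exacts [T.col_strict hi h₂, hT _ _ h₁]
  zeros' h := by rw [if_neg fun h' ↦ h (hν.1 h'), if_neg h]

theorem restrictTableau_apply {hν : ν ≤ μ} {T : SemistandardYoungTableau μ} {i j : ℕ} :
    restrictTableau hν T i j = if (i, j) ∈ ν then T i j else 0 :=
  rfl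

theorem extendTableau_apply {hν : IsHorizontalStrip ν μ} {T : SemistandardYoungTableau ν}
    {hT : EntryLE ν T k} {i j : ℕ} :
    extendTableau hν T hT i j = if (i, j) ∈ ν then T i j else if (i, j) ∈ μ then k else 0 :=
  rfl

theorem entryLE_extendTableau (hν : IsHorizontalStrip ν μ) {T : SemistandardYoungTableau ν}
    (hT : EntryLE ν T k) : EntryLE μ (extendTableau hν T hT) (k + 1) := by
  intro i j hij
  rw [extendTableau_apply, if_pos hij]
  split_ifs with h
  exacts [(hT _ _ h).trans k.lt_succ_self, k.lt_succ_self]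

theorem shapeLT_extendTableau (hν : IsHorizontalStrip ν μ) {T : SemistandardYoungTableau ν}
    (hT : EntryLE ν T k) : shapeLT (extendTableau hν T hT) k = ν := by
  ext ⟨i, j⟩
  rw [mem_cells, mem_cells, mem_shapeLT, extendTableau_apply]
  refine ⟨fun ⟨hij, hlt⟩ ↦ ?_, fun h ↦ ⟨hν.1 h, by rw [if_pos h]; exact hT _ _ h⟩⟩
  by_contra h
  rw [if_neg h, if_pos hij] at hlt
  exact lt_irrefl k hlt

theorem entryLE_restrictTableau (hν : ν ≤ μ) {T : SemistandardYoungTableau μ}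
    (hT : shapeLT T k = ν) : EntryLE ν (restrictTableau hν T) k := by
  intro i j hij
  rw [restrictTableau_apply, if_pos hij]
  exact (mem_shapeLT.1 (hT.symm ▸ hij)).2

theorem restrictTableau_extendTableau (hν : IsHorizontalStrip ν μ)
    {T : SemistandardYoungTableau ν} (hT : EntryLE ν T k) :
    restrictTableau hν.1 (extendTableau hν T hT) = T := by
  ext i j
  rw [restrictTableau_apply, extendTableau_apply]
  split_ifs with hij
  exacts [rfl, (T.zeros hij).symm]

theorem extendTableau_restrictTableau (hν : IsHorizontalStrip ν μ)
    {T : SemistandardYoungTableau μ} (hT : EntryLE μ T (k + 1)) (hTν : shapeLT T k = ν) :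
    extendTableau hν (restrictTableau hν.1 T) (entryLE_restrictTableau hν.1 hTν) = T := by
  ext i j
  rw [extendTableau_apply, restrictTableau_apply]
  split_ifs with hlt hij
  · rfl
  · exact le_antisymm (not_lt.1 fun h ↦ hlt (hTν ▸ mem_shapeLT.2 ⟨hij, h⟩))
      (Nat.le_of_lt_succ (hT _ _ hij))
  · exact (T.zeros hij).symm

/-- Removing the entries `k` from a tableau with entries at most `k`. -/
def restrictShapeLTEquiv (hν : IsHorizontalStrip ν μ) (k : ℕ) :
    {T : {T : SemistandardYoungTableau μ // EntryLE μ T (k + 1)} // shapeLT T.1 k = ν} ≃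
      {T : SemistandardYoungTableau ν // EntryLE ν T k} where
  toFun T := ⟨restrictTableau hν.1 T.1.1, entryLE_restrictTableau hν.1 T.2⟩
  invFun T := ⟨⟨extendTableau hν T.1 T.2, entryLE_extendTableau hν T.2⟩,
    shapeLT_extendTableau hν T.2⟩
  left_inv T := Subtype.ext (Subtype.ext (extendTableau_restrictTableau hν T.1.2 T.2))
  right_inv T := Subtype.ext (restrictTableau_extendTableau hν T.2)

theorem ssytle_succ (μ : YoungDiagram) (k : ℕ) :
    SSYTle μ (k + 1) = ∑ ν ∈ horizontalStrips μ, SSYTle ν k := by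
  let f (T : {T // EntryLE μ T (k + 1)}) : horizontalStrips μ :=
    ⟨shapeLT T.1 k, mem_horizontalStrips.2 (isHorizontalStrip_shapeLT T.2)⟩
  rw [SSYTle, Nat.card_congr (Equiv.sigmaFiberEquiv f).symm, Nat.card_sigma,
    ← Finset.sum_coe_sort (horizontalStrips μ)]
  refine Finset.sum_congr rfl fun ν _ ↦ Nat.card_congr ?_
  exact (Equiv.subtypeEquivRight fun T ↦ Subtype.ext_iff).trans
    (restrictShapeLTEquiv (mem_horizontalStrips.1 ν.2) k)

theorem isHorizontalStrip_iff_rowLen :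
    IsHorizontalStrip ν μ ↔ ∀ i, μ.rowLen (i + 1) ≤ ν.rowLen i ∧ ν.rowLen i ≤ μ.rowLen i := by
  have hle : ν ≤ μ ↔ ∀ i j, (i, j) ∈ ν → (i, j) ∈ μ := ⟨fun h _ _ hij ↦ h hij, fun h c ↦ h c.1 c.2⟩
  simp only [IsHorizontalStrip, hle, mem_iff_lt_rowLen, forall_lt_iff_le, forall_and, and_comm]

theorem ext_of_rowLen_eq (h : ν.rowLen = μ.rowLen) : ν = μ := by
  ext ⟨i, j⟩
  rw [mem_cells, mem_cells, mem_iff_lt_rowLen, mem_iff_lt_rowLen, h]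

theorem exists_isHorizontalStrip_rowLen_eq {g : ℕ → ℕ}
    (hg : ∀ i, μ.rowLen (i + 1) ≤ g i ∧ g i ≤ μ.rowLen i) :
    ∃ ν, IsHorizontalStrip ν μ ∧ ν.rowLen = g := by
  have hanti : Antitone g := antitone_nat_of_succ_le fun i ↦ (hg (i + 1)).2.trans (hg i).1
  let ν := subdiagram μ (fun i j ↦ j < g i) fun hi hj _ h ↦ hj.trans_lt (h.trans_le (hanti hi))
  have hν : ν.rowLen = g := funext fun i ↦ eq_of_forall_lt_iff fun j ↦ by
    rw [← mem_iff_lt_rowLen, mem_subdiagram, mem_iff_lt_rowLen]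
    exact and_iff_right_of_imp fun h ↦ h.trans_le (hg i).2
  exact ⟨ν, isHorizontalStrip_iff_rowLen.2 (hν ▸ hg), hν⟩

end BranchingRule

section BinomialDeterminant

open Finset Matrix

variable {k : ℕ}

/-- The matrix of binomial coefficients `(r i).choose j`. -/
def chooseMatrix (r : Fin k → ℕ) : Matrix (Fin k) (Fin k) ℤ :=
  .of fun i j ↦ ((r i).choose j : ℤ)

theorem sum_Ico_choose {a b : ℕ} (hab : a ≤ b) (j : ℕ) :
    ∑ s ∈ Ico a b, (s.choose j : ℤ) = b.choose (j + 1) - a.choose (j + 1) := by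
  induction b, hab using Nat.le_induction with
  | base => simp
  | succ b hab ih => rw [sum_Ico_succ_top hab, ih, Nat.choose_succ_succ]; push_cast; ring

theorem sum_piFinset_det {n ι R : Type*} [Fintype n] [DecidableEq n] [CommRing R]
    (v : ι → n → R) (s : n → Finset ι) :
    ∑ f ∈ Fintype.piFinset s, (of fun i ↦ v (f i)).det = (of fun i ↦ ∑ x ∈ s i, v x).det :=
  (detRowAlternating.toMultilinearMap.map_sum_finset (fun _ ↦ v) s).symm

/-- Subtracting from each row the preceding one clears the first column. -/
theorem det_chooseMatrix_succ (r : Fin (k + 1) → ℕ) :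
    (chooseMatrix r).det = (of fun i j : Fin k ↦
      ((r i.succ).choose (j + 1) - (r i.castSucc).choose (j + 1) : ℤ)).det := by
  let B : Matrix (Fin (k + 1)) (Fin (k + 1)) ℤ := of fun i j ↦
    Fin.cases ((r 0).choose j : ℤ) (fun i ↦ (r i.succ).choose j - (r i.castSucc).choose j) i
  have hB : (chooseMatrix r).det = B.det :=
    det_eq_of_forall_row_eq_smul_add_pred (fun _ ↦ 1) (fun j ↦ by simp [chooseMatrix, B])
      fun i j ↦ by simp [chooseMatrix, B]
  have hsub : B.submatrix (Fin.succAbove 0) Fin.succ =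
      of fun i j : Fin k ↦ ((r i.succ).choose (j + 1) - (r i.castSucc).choose (j + 1) : ℤ) := by
    ext i j
    simp [B]
  rw [hB, det_succ_column_zero, Fin.sum_univ_succ, sum_eq_zero fun i _ ↦ by simp [B], hsub]
  simp [B]

theorem sum_piFinset_det_chooseMatrix {r : Fin (k + 1) → ℕ}
    (hr : ∀ i : Fin k, r i.castSucc ≤ r i.succ) :
    ∑ s ∈ Fintype.piFinset fun i : Fin k ↦ Ico (r i.castSucc) (r i.succ), (chooseMatrix s).det =
      (chooseMatrix r).det := by
  rw [det_chooseMatrix_succ]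
  refine (sum_piFinset_det (fun (s : ℕ) (j : Fin k) ↦ (s.choose j : ℤ)) _).trans ?_
  congr 1
  ext i j
  rw [of_apply, of_apply, Finset.sum_apply, sum_Ico_choose (hr i)]

theorem det_chooseMatrix_cons_zero_mul_factorial (r : Fin k → ℕ) :
    (chooseMatrix (Fin.cons 0 fun i ↦ r i + 1)).det * (k.factorial : ℤ) =
      (chooseMatrix r).det * ∏ i, ((r i : ℤ) + 1) := by
  have hminor : (chooseMatrix (Fin.cons 0 fun i ↦ r i + 1)).det =
      (of fun i j : Fin k ↦ ((r i + 1).choose (j + 1) : ℤ)).det := by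
    rw [det_succ_row_zero, Fin.sum_univ_succ, sum_eq_zero fun i _ ↦ by simp [chooseMatrix]]
    simp only [chooseMatrix, of_apply, Fin.cons_zero, Fin.val_zero, pow_zero, one_mul, add_zero,
      Nat.choose_self, Nat.cast_one]
    congr 1
  have hfactorial : (k.factorial : ℤ) = ∏ j : Fin k, ((j : ℤ) + 1) := by
    rw [← prod_range_add_one_eq_factorial, ← Fin.prod_univ_eq_prod_range (· + 1)]
    push_cast
    rfl
  rw [hminor, hfactorial, mul_comm, ← det_mul_row, mul_comm, ← det_mul_column]
  congr 1
  ext i j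
  simp only [of_apply, chooseMatrix]
  exact_mod_cast (mul_comm _ _).trans (Nat.add_one_mul_choose_eq (r i) j).symm

end BinomialDeterminant

section DeterminantFormula

open Finset

variable {μ ν : YoungDiagram} {k : ℕ}

/-- The increasing sequence `μ (k - 1), μ (k - 2) + 1, …, μ 0 + (k - 1)` of shifted row lengths. -/
def shiftedRowLen (μ : YoungDiagram) (k : ℕ) (i : Fin k) : ℕ :=
  μ.rowLen i.rev + i

/-- The values of `shiftedRowLen ν k` that interlace those of `shiftedRowLen μ (k + 1)`. -/
def interlacing (μ : YoungDiagram) (k : ℕ) : Finset (Fin k → ℕ) :=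
  Fintype.piFinset fun i ↦
    Ico (shiftedRowLen μ (k + 1) i.castSucc) (shiftedRowLen μ (k + 1) i.succ)

theorem mem_interlacing {s : Fin k → ℕ} :
    s ∈ interlacing μ k ↔ ∀ i, μ.rowLen (i.rev + 1) + i ≤ s i ∧ s i ≤ μ.rowLen i.rev + i := by
  simp [interlacing, shiftedRowLen, Fin.rev_castSucc, Fin.rev_succ, ← add_assoc]

theorem rowLen_eq_zero_of_le {i j : ℕ} (hij : i ≤ j) (h : μ.rowLen i = 0) : μ.rowLen j = 0 :=
  Nat.eq_zero_of_le_zero (h ▸ μ.rowLen_anti _ _ hij)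

theorem shiftedRowLen_mem_interlacing (h : IsHorizontalStrip ν μ) :
    shiftedRowLen ν k ∈ interlacing μ k := by
  have h := isHorizontalStrip_iff_rowLen.1 h
  exact mem_interlacing.2 fun i ↦ ⟨Nat.add_le_add_right (h _).1 _, Nat.add_le_add_right (h _).2 _⟩

theorem eq_of_shiftedRowLen_eq (hμ : μ.rowLen k = 0) (hν : ν.rowLen k = 0)
    (h : shiftedRowLen μ k = shiftedRowLen ν k) : μ = ν := by
  refine ext_of_rowLen_eq (funext fun q ↦ ?_)
  obtain hq | hq := lt_or_ge q k
  · simpa [shiftedRowLen] using congr_fun h (Fin.rev ⟨q, hq⟩)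
  · rw [rowLen_eq_zero_of_le hq hμ, rowLen_eq_zero_of_le hq hν]

theorem exists_shiftedRowLen_eq (hμ : μ.rowLen (k + 1) = 0) {s : Fin k → ℕ}
    (hs : s ∈ interlacing μ k) :
    ∃ ν, IsHorizontalStrip ν μ ∧ ν.rowLen k = 0 ∧ shiftedRowLen ν k = s := by
  rw [mem_interlacing] at hs
  let g (q : ℕ) : ℕ := if hq : q < k then s (Fin.rev ⟨q, hq⟩) - Fin.rev ⟨q, hq⟩ else 0
  have hg (i : Fin k) : g i.rev + i = s i := by
    simp only [g, dif_pos i.rev.is_lt, Fin.eta, Fin.rev_rev]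
    exact Nat.sub_add_cancel (le_of_add_le_right (hs i).1)
  have hgμ (q : ℕ) : μ.rowLen (q + 1) ≤ g q ∧ g q ≤ μ.rowLen q := by
    obtain hq | hq := lt_or_ge q k
    · have hi := hs (Fin.rev ⟨q, hq⟩)
      rw [← hg] at hi
      simpa using hi
    · rw [rowLen_eq_zero_of_le (Nat.add_le_add_right hq 1) hμ, show g q = 0 from dif_neg hq.not_gt]
      exact ⟨le_rfl, Nat.zero_le _⟩
  obtain ⟨ν, hν, hνg⟩ := exists_isHorizontalStrip_rowLen_eq hgμ
  refine ⟨ν, hν, ?_, funext fun i ↦ ?_⟩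
  · rw [hνg, show g k = 0 from dif_neg (lt_irrefl k)]
  · rw [shiftedRowLen, hνg, hg]

theorem ssytle_zero (hμ : μ.rowLen 0 = 0) : SSYTle μ 0 = 1 := by
  have hempty (i j : ℕ) : (i, j) ∉ μ := by
    simp [mem_iff_lt_rowLen, rowLen_eq_zero_of_le i.zero_le hμ]
  rw [SSYTle, Nat.card_eq_one_iff_unique]
  refine ⟨⟨fun T T' ↦ Subtype.ext (SemistandardYoungTableau.ext fun i j ↦ ?_)⟩,
    ⟨.highestWeight μ, fun i j h ↦ (hempty i j h).elim⟩⟩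
  rw [T.1.zeros (hempty i j), T'.1.zeros (hempty i j)]

/-- Both sides satisfy the branching rule: on the right, the determinant is expanded along
the interlacing sequences. -/
theorem ssytle_eq_det (hμ : μ.rowLen k = 0) :
    (SSYTle μ k : ℤ) = (chooseMatrix (shiftedRowLen μ k)).det := by
  induction k generalizing μ with
  | zero => rw [ssytle_zero hμ, Matrix.det_isEmpty, Nat.cast_one]
  | succ k ih =>
    have hinterlacing (i : Fin k) :
        shiftedRowLen μ (k + 1) i.castSucc ≤ shiftedRowLen μ (k + 1) i.succ := by
      have := μ.rowLen_anti i.rev (i.rev + 1) (Nat.le_succ _)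
      simp only [shiftedRowLen, Fin.rev_castSucc, Fin.rev_succ, Fin.val_succ, Fin.val_castSucc]
      lia
    have hzero (ν) (_ : ν ∈ horizontalStrips μ) (h : SSYTle ν k ≠ 0) : ν.rowLen k = 0 := by
      contrapose! h
      exact ssytle_eq_zero (mem_iff_lt_rowLen.2 h.pos)
    rw [ssytle_succ, ← sum_filter_of_ne hzero, ← sum_piFinset_det_chooseMatrix hinterlacing,
      Nat.cast_sum]
    refine sum_nbij (shiftedRowLen · k) ?_ ?_ ?_ ?_
    all_goals simp only [Set.InjOn, coe_filter, mem_filter, mem_horizontalStrips]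
    · exact fun ν hν ↦ shiftedRowLen_mem_interlacing hν.1
    · exact fun ν hν ν' hν' h ↦ eq_of_shiftedRowLen_eq hν.2 hν'.2 h
    · intro s hs
      obtain ⟨ν, hν, hk, rfl⟩ := exists_shiftedRowLen_eq hμ hs
      exact ⟨ν, ⟨hν, hk⟩, rfl⟩
    · exact fun ν hν ↦ ih hν.2

theorem shiftedRowLen_succ (hμ : μ.rowLen k = 0) :
    shiftedRowLen μ (k + 1) = Fin.cons 0 fun i ↦ shiftedRowLen μ k i + 1 := by
  refine funext (Fin.cases ?_ fun i ↦ ?_)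
  · simp [shiftedRowLen, hμ]
  · simp [shiftedRowLen, Fin.rev_succ, add_assoc]

theorem prod_shiftedRowLen_add_one (μ : YoungDiagram) (k : ℕ) :
    ∏ i, (shiftedRowLen μ k i + 1) = ∏ q ∈ range k, (μ.rowLen q + (k - q)) := by
  rw [← Fin.prod_univ_eq_prod_range (fun q ↦ μ.rowLen q + (k - q)),
    ← Equiv.prod_comp Fin.revPerm fun i ↦ shiftedRowLen μ k i + 1]
  refine prod_congr rfl fun i _ ↦ ?_
  simp only [shiftedRowLen, Fin.revPerm_apply, Fin.rev_rev, Fin.val_rev]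
  lia

theorem ssytle_succ_mul_factorial (hμ : μ.rowLen k = 0) :
    SSYTle μ (k + 1) * k.factorial = SSYTle μ k * ∏ q ∈ range k, (μ.rowLen q + (k - q)) := by
  have h := det_chooseMatrix_cons_zero_mul_factorial (shiftedRowLen μ k)
  rw [← shiftedRowLen_succ hμ, ← ssytle_eq_det hμ,
    ← ssytle_eq_det (rowLen_eq_zero_of_le k.le_succ hμ)] at h
  rw [← prod_shiftedRowLen_add_one]
  exact_mod_cast h

end DeterminantFormula

section RowShape

open Finset

variable {μ : YoungDiagram} {l1 l2 h1 h2 k : ℕ}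

theorem prod_Ico_sub_mul_factorial {a b x : ℕ} (hab : a ≤ b) (hbx : b ≤ x) :
    (∏ q ∈ Ico a b, (x - q)) * (x - b).factorial = (x - a).factorial := by
  induction b, hab using Nat.le_induction with
  | base => simp
  | succ b hab ih =>
    rw [prod_Ico_succ_top hab, mul_assoc, ← ih (Nat.le_of_succ_le hbx),
      show x - b = x - (b + 1) + 1 by lia, Nat.factorial_succ]

theorem card_eq_sum_rowLen (hμ : μ.rowLen k = 0) : μ.card = ∑ i ∈ range k, μ.rowLen i := by
  have hrow : Set.MapsTo Prod.fst (μ.cells : Set (ℕ × ℕ)) (range k : Set ℕ) := by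
    rintro ⟨i, j⟩ hij
    by_contra hi
    rw [mem_coe, mem_cells, mem_iff_lt_rowLen, rowLen_eq_zero_of_le (by simpa using hi) hμ] at hij
    exact Nat.not_lt_zero j hij
  rw [YoungDiagram.card, card_eq_sum_card_fiberwise hrow]
  exact sum_congr rfl fun i _ ↦ μ.rowLen_eq_card.symm

theorem HasRows2.card_eq (hμ : HasRows2 μ l1 l2 h1 h2) (hh2 : 2 ≤ h2) (hh : h2 ≤ h1) :
    μ.card = l1 + l2 + h1 + h2 - 4 := by
  obtain ⟨hrow0, hrow1, hrow2, hrow3, hrow4⟩ := hμ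
  have htwo : ∑ i ∈ Ico 2 h2, μ.rowLen i = (h2 - 2) * 2 := by
    rw [sum_congr rfl fun i hi ↦ hrow2 i (mem_Ico.1 hi).1 (mem_Ico.1 hi).2]
    simp
  have hone : ∑ i ∈ Ico h2 h1, μ.rowLen i = h1 - h2 := by
    rw [sum_congr rfl fun i hi ↦ hrow3 i (mem_Ico.1 hi).1 (mem_Ico.1 hi).2]
    simp
  rw [card_eq_sum_rowLen (hrow4 h1 le_rfl), ← sum_range_add_sum_Ico _ hh,
    ← sum_range_add_sum_Ico _ hh2, htwo, hone, sum_range_succ, sum_range_one, hrow0, hrow1]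
  lia

theorem HasRows2.mem_of_lt (hμ : HasRows2 μ l1 l2 h1 h2) (hl2 : 1 ≤ l2) (hk : k < h1) :
    (k, 0) ∈ μ := by
  obtain ⟨-, hrow1, hrow2, hrow3, -⟩ := hμ
  rw [mem_iff_lt_rowLen]
  obtain hk1 | hk2 := le_or_gt k 1
  · exact (hrow1 ▸ hl2).trans (μ.rowLen_anti _ _ hk1)
  · obtain hkh2 | hkh2 := lt_or_ge k h2
    · simp [hrow2 k hk2 hkh2]
    · simp [hrow3 k hkh2 hk]

theorem HasRows2.prod_rowLen_add (hμ : HasRows2 μ l1 l2 h1 h2) (hh2 : 2 ≤ h2)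
    (hh : h2 ≤ h1) (hk : h1 ≤ k) :
    (∏ q ∈ range k, (μ.rowLen q + (k - q))) * ((k + 2 - h2) * (k + 1 - h1)) =
      (l1 + k) * (l2 + k - 1) * k.factorial := by
  obtain ⟨hrow0, hrow1, hrow2, hrow3, hrow4⟩ := hμ
  have htwo : ∏ q ∈ Ico 2 h2, (μ.rowLen q + (k - q)) = ∏ q ∈ Ico 2 h2, (k + 2 - q) :=
    prod_congr rfl fun q hq ↦ by have := mem_Ico.1 hq; rw [hrow2 q this.1 this.2]; lia
  have hone : ∏ q ∈ Ico h2 h1, (μ.rowLen q + (k - q)) = ∏ q ∈ Ico h2 h1, (k + 1 - q) :=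
    prod_congr rfl fun q hq ↦ by have := mem_Ico.1 hq; rw [hrow3 q this.1 this.2]; lia
  have hzero : ∏ q ∈ Ico h1 k, (μ.rowLen q + (k - q)) = (k - h1).factorial := by
    rw [← prod_Ico_sub_mul_factorial hk le_rfl, Nat.sub_self, Nat.factorial_zero, mul_one]
    exact prod_congr rfl fun q hq ↦ by rw [hrow4 q (mem_Ico.1 hq).1, zero_add]
  have hfactorial₂ := prod_Ico_sub_mul_factorial hh2 (show h2 ≤ k + 2 by lia)
  have hfactorial₁ := prod_Ico_sub_mul_factorial hh (show h1 ≤ k + 1 by lia)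
  rw [show k + 2 - h2 = k + 1 - h2 + 1 by lia, Nat.factorial_succ, ← hfactorial₁,
    show k + 1 - h1 = k - h1 + 1 by lia, Nat.factorial_succ, Nat.add_sub_cancel] at hfactorial₂
  rw [← prod_range_mul_prod_Ico _ hk, ← prod_range_mul_prod_Ico _ hh,
    ← prod_range_mul_prod_Ico _ hh2, htwo, hone, hzero, prod_range_succ, prod_range_one, hrow0,
    hrow1, ← hfactorial₂, Nat.sub_zero, show l2 + (k - 1) = l2 + k - 1 by lia,
    show k + 2 - h2 = k + 1 - h2 + 1 by lia, show k + 1 - h1 = k - h1 + 1 by lia]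
  ring

theorem HasRows2.ssytle_succ_mul (hμ : HasRows2 μ l1 l2 h1 h2) (hh2 : 2 ≤ h2)
    (hh : h2 ≤ h1) (hk : h1 ≤ k) :
    SSYTle μ (k + 1) * ((k + 2 - h2) * (k + 1 - h1)) =
      SSYTle μ k * ((l1 + k) * (l2 + k - 1)) := by
  refine Nat.eq_of_mul_eq_mul_right k.factorial_pos ?_
  rw [mul_right_comm, ssytle_succ_mul_factorial (hμ.2.2.2.2 k hk), mul_assoc,
    hμ.prod_rowLen_add hh2 hh hk, ← mul_assoc]

theorem ssytle_add_eq_sum {h n : ℕ} (hμ : μ.card = n) (hn : 0 < n) (hcol : ∀ k < h, (k, 0) ∈ μ)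
    (s : ℕ) :
    SSYTle μ (h + s) = ∑ x ∈ HasAntidiagonal.antidiagonal s,
      QYTeq μ (h + x.1) * (n + x.2).choose n := by
  obtain ⟨N, rfl⟩ := Nat.exists_eq_succ_of_ne_zero hn.ne'
  rw [ssytle_eq_sum_qyteq_mul_choose hμ, sum_antidiagonal_add_of_eq_zero]
  intro x _ hx
  rw [qyteq_eq_zero (hcol _ hx), zero_mul]

end RowShape

theorem qyt_ssyt_identity_one_general (l1 l2 h1 h2 m : ℕ)
    (hl2 : 1 ≤ l2) (hh2 : 2 ≤ h2) (hh : h2 ≤ h1) (hm : h1 ≤ m)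
    (μ : YoungDiagram) (hμ : HasRows2 μ l1 l2 h1 h2) :
    (m - h2 + 1).choose (h1 - h2 + 1) * QYTeq μ m =
      (l1 + h2 - 2).choose (m - h1) * (l2 + h2 - 3).choose (m - h1) * SSYTle μ h1 := by
  have hl : l2 ≤ l1 := hμ.1 ▸ hμ.2.1 ▸ μ.rowLen_anti 0 1 zero_le_one
  have hcard : μ.card =
      l2 + h2 - 3 + (h1 - h2 + 1) + (l1 - l2 + 1) + (l2 + h2 - 3) := by
    rw [hμ.card_eq hh2 hh]
    lia
  have hratio (s : ℕ) : SSYTle μ (h1 + (s + 1)) * ((s + (h1 - h2 + 1) + 1) * (s + 1)) =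
      SSYTle μ (h1 + s) * ((l2 + h2 - 3 + (h1 - h2 + 1) + (l1 - l2 + 1) + s + 1) *
        (l2 + h2 - 3 + (h1 - h2 + 1) + s + 1)) := by
    convert hμ.ssytle_succ_mul hh2 hh (Nat.le_add_right h1 s) using 3 <;> lia
  have key := choose_mul_eq_of_sum_antidiagonal_eq (S := fun s ↦ SSYTle μ (h1 + s))
    (Q := fun t ↦ QYTeq μ (h1 + t))
    (ssytle_add_eq_sum hcard (by lia) fun _ ↦ hμ.mem_of_lt hl2) hratio (m - h1)
  rwa [add_zero, Nat.add_sub_cancel' hm, show h1 - h2 + 1 + (m - h1) = m - h2 + 1 by lia,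
    show l2 + h2 - 3 + (l1 - l2 + 1) = l1 + h2 - 2 by lia] at key

/-- the identity
`C(m-h₂+1, h₁-h₂+1) · QYT_{=m}(λ) = C(λ₁+h₂-2, m-h₁) · C(λ₂+h₂-3, m-h₁) · SSYT_{h₁}(λ)`
for `λ = (λ₁, λ₂, 2^{h₂-2}, 1^{h₁-h₂})`. -/
theorem qyt_ssyt_identity_one (l1 l2 h1 h2 m : ℕ)
    (hl2 : 2 ≤ l2) (hl : l2 ≤ l1) (hh2 : 2 ≤ h2) (hh : h2 ≤ h1)
    (hm1 : h1 ≤ m) (hm2 : m ≤ h1 + h2 + l2 - 3)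
    (μ : YoungDiagram) (hμ : HasRows2 μ l1 l2 h1 h2) :
    (m - h2 + 1).choose (h1 - h2 + 1) * QYTeq μ m =
      (l1 + h2 - 2).choose (m - h1) * (l2 + h2 - 3).choose (m - h1) * SSYTle μ h1 :=
  qyt_ssyt_identity_one_general l1 l2 h1 h2 m (Nat.le_of_succ_le hl2) hh2 hh hm1 μ hμ
end
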